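/- arXiv:2507.16374 — 3 statements merged into one kernel-verified Lean document; each statement's English description precedes it below -/
import Mathlib

section
/- Let X be a path-connected aspherical topological space and f_1, …, f_n : X → X continuous maps, each of which is a homotopy equivalence. Let K be the space obtained by gluing the mapping tori T_{f_1}, …, T_{f_n} along their common subspace X × {0}. Then K is aspherical, i.e. π_i(K) is trivial for all i ≥ 2. -/
/-!
The glued mapping tori `K` are covered by a tree of spaces `Tree f`, pulled back from the universal
cover of a wedge of `m` circles: it has a vertex space `X` for each element `w` of the free group
`F`, and for each `j` a cylinder `X × [0,1]` which starts at the vertex space `w` and is attached by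
`f j` to the vertex space `of j * w`. The free group acts on it with quotient `K`
(`isQuotientCoveringMap_proj`), so spheres of dimension at least two lift to `Tree f`
(`exists_lift`). It remains to see that spheres in `Tree f` are null-homotopic (`freeNull_tree`).

Were the tree of spaces a product of the tree `BaseTree m` and `X`, this would follow from
contractibility of the tree (`baseTree_contract`) and asphericity of `X`. It is one up to homotopy.
As the `f j` are homotopy equivalences, there are maps `r w : X → X` and `s w : X → X` which are
compatible with the attaching maps up to homotopy and such that `s w ∘ r w` is homotopic to the
identity (`exists_data`); they are constructed along the tree (`tree_choice`). The `r w` give a map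
from `Tree f` to `X`, and the `s w` give a map from the product of the tree and `X` back to `Tree f`.
The composition `M : Tree f → Tree f` has a left homotopy inverse (`exists_left_inverse`). No
coherence of the chosen homotopies is needed for this: `M` is homotopic to a map which is the
identity on the vertex spaces and differs from the identity on cylinders by loops of maps, and
running through the inverse loops undoes this up to homotopy (`exists_left_inverse_of_loops`). A
sphere in `Tree f` becomes null-homotopic after applying `M`, hence is null-homotopic itself.

All homotopies of spheres are free homotopies of maps of cubes which are constant on the boundary;
only at the end they are made relative to the boundary (`FreeNull.homotopicRel`).
-/

/-!
Statement 2: If `X` is a path-connected aspherical space and `f_1, …, f_m : X → X` are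
homotopy equivalences, then the space obtained by gluing the mapping tori of the `f_j`
along `X × {0}` is aspherical.
-/

open unitInterval

/-- A space `Z` is aspherical if all its homotopy groups `π_i(Z, z)` for `i ≥ 2` are
trivial (for every basepoint `z`). -/
def Aspherical (Z : Type*) [TopologicalSpace Z] : Prop :=
  ∀ (z : Z) (i : ℕ), 2 ≤ i → Subsingleton (HomotopyGroup (Fin i) Z z)

/-- The relation on `X × [0,1] × Fin m` generating the space obtained by gluing the mapping
tori of the maps `f j` along `X × {0}`:  `(x, 1, j) ∼ (f j x, 0, j)` (the mapping torus
identification in the `j`-th torus) and `(x, 0, j) ∼ (x, 0, k)` (the gluing along `X × {0}`). -/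
def GluedToriRel {X : Type*} {m : ℕ} (f : Fin m → X → X) :
    X × I × Fin m → X × I × Fin m → Prop := fun a b =>
  (a.2.1 = 1 ∧ b.2.1 = 0 ∧ b.1 = f a.2.2 a.1 ∧ b.2.2 = a.2.2) ∨
  (a.2.1 = 0 ∧ b.2.1 = 0 ∧ b.1 = a.1)

/-- The space `K` obtained by gluing the mapping tori `T_{f_1}, …, T_{f_m}` along `X × {0}`. -/
def GluedMappingTori {X : Type*} [TopologicalSpace X] {m : ℕ} (f : Fin m → X → X) : Type _ :=
  Quot (GluedToriRel f)

instance {X : Type*} [TopologicalSpace X] {m : ℕ} (f : Fin m → X → X) :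
    TopologicalSpace (GluedMappingTori f) :=
  inferInstanceAs (TopologicalSpace (Quot _))


namespace GluedTori

open FreeGroup (of)

/-! ### Free null-homotopies of maps of cubes -/

/-- A map from the `n`-cube is constant on the boundary, i.e. it factors through the `n`-sphere. -/
def BConst {n : ℕ} {Z : Type*} [TopologicalSpace Z] (φ : C(Fin n → I, Z)) : Prop :=
  ∀ y ∈ Cube.boundary (Fin n), ∀ y' ∈ Cube.boundary (Fin n), φ y = φ y'

/-- `φ` is null-homotopic through maps which are constant on the boundary of the cube; the value
on the boundary may move during the homotopy. -/
def FreeNull {n : ℕ} {Z : Type*} [TopologicalSpace Z] (φ : C(Fin n → I, Z)) : Prop :=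
  ∃ z : Z, φ.HomotopicWith (ContinuousMap.const _ z) BConst

lemma homotopicWith_comp {n : ℕ} {Z Z' : Type*} [TopologicalSpace Z] [TopologicalSpace Z']
    {φ₁ φ₂ : C(Z, Z')} (h : φ₁.Homotopic φ₂) {ψ : C(Fin n → I, Z)} (hψ : BConst ψ) :
    (φ₁.comp ψ).HomotopicWith (φ₂.comp ψ) BConst := by
  obtain ⟨H⟩ := h
  refine ⟨⟨⟨⟨fun p => H (p.1, ψ p.2), by fun_prop⟩, by simp, by simp⟩, ?_⟩⟩
  intro t y hy y' hy'
  simp [hψ y hy y' hy']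

lemma FreeNull.map {n : ℕ} {Z Z' : Type*} [TopologicalSpace Z] [TopologicalSpace Z']
    (φ : C(Z, Z')) {ψ : C(Fin n → I, Z)} (hψ : FreeNull ψ) : FreeNull (φ.comp ψ) := by
  obtain ⟨z, ⟨H⟩⟩ := hψ
  refine ⟨φ z, ⟨⟨⟨⟨fun p => φ (H p), by fun_prop⟩, by simp, by simp⟩, ?_⟩⟩⟩
  intro t y hy y' hy'
  exact congrArg φ (H.prop' t y hy y' hy')

lemma FreeNull.of_homotopicWith {n : ℕ} {Z : Type*} [TopologicalSpace Z]
    {φ ψ : C(Fin n → I, Z)} (h : φ.HomotopicWith ψ BConst) (hψ : FreeNull ψ) : FreeNull φ := by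
  obtain ⟨z, hz⟩ := hψ
  exact ⟨z, h.trans hz⟩

/-- Free null-homotopies can be made relative to the boundary: the collar of the cube is used to
absorb the track of the boundary point. -/
lemma FreeNull.homotopicRel {n : ℕ} {Z : Type*} [TopologicalSpace Z]
    (hn : 0 < n) {φ : C(Fin n → I, Z)} {z : Z} (hz : ∀ y ∈ Cube.boundary (Fin n), φ y = z)
    (h : FreeNull φ) :
    φ.HomotopicRel (ContinuousMap.const _ z) (Cube.boundary (Fin n)) := by
  obtain ⟨z', ⟨H⟩⟩ := h
  let b : Fin n → I := fun _ => 0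
  have hb : b ∈ Cube.boundary (Fin n) := ⟨⟨0, hn⟩, Or.inl rfl⟩
  -- the cube is stretched so that, at `s = 1`, a collar is pushed onto the boundary
  let E : I → (Fin n → I) → (Fin n → I) := fun s y i =>
    Set.projIcc (0 : ℝ) 1 zero_le_one (((y i : ℝ) - 1 / 2) * (1 + s) + 1 / 2)
  -- `τ` vanishes on the boundary, and `τ 1` is equal to `1` outside of the collar
  let τ : I → (Fin n → I) → I := fun s y => s * ∏ i,
    Set.projIcc (0 : ℝ) 1 zero_le_one (min (4 * (y i : ℝ)) (4 * (1 - (y i : ℝ))))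
  have hEc : Continuous fun p : I × (Fin n → I) => E p.1 p.2 := by
    refine continuous_pi fun i => continuous_projIcc.comp ?_
    fun_prop
  have hτc : Continuous fun p : I × (Fin n → I) => τ p.1 p.2 := by
    refine continuous_fst.mul (continuous_finsetProd _ fun i _ => continuous_projIcc.comp ?_)
    fun_prop
  have hτb : ∀ s, ∀ y ∈ Cube.boundary (Fin n), τ s y = 0 := by
    rintro s y ⟨i, hi⟩
    have : ∏ i, Set.projIcc (0 : ℝ) 1 zero_le_one
        (min (4 * (y i : ℝ)) (4 * (1 - (y i : ℝ)))) = 0 := by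
      refine Finset.prod_eq_zero (Finset.mem_univ i) ?_
      apply Set.projIcc_of_le_left
      rcases hi with hi | hi <;> simp [hi]
    simp only [τ, this, mul_zero]
  have hEb : ∀ s, ∀ y ∈ Cube.boundary (Fin n), E s y ∈ Cube.boundary (Fin n) := by
    rintro s y ⟨i, hi⟩
    have hs := s.2.1
    refine ⟨i, hi.imp (fun hi => Set.projIcc_of_le_left _ ?_)
      (fun hi => Set.projIcc_of_right_le _ ?_)⟩
    · simp only [hi, Set.Icc.coe_zero]; linarith
    · simp only [hi, Set.Icc.coe_one]; linarith
  have hHb : ∀ t, ∀ y ∈ Cube.boundary (Fin n), H (t, y) = H (t, b) :=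
    fun t y hy => H.prop' t y hy b hb
  have hE0 : ∀ y, E 0 y = y := by
    intro y; funext i
    have : ((y i : ℝ) - 1 / 2) * (1 + ((0 : I) : ℝ)) + 1 / 2 = y i := by simp
    simp only [E, this, Set.projIcc_val]
  have hone : ∀ y, H (τ 1 y, E 1 y) = H (τ 1 y, b) := by
    intro y
    by_cases hy : ∃ i, (y i : ℝ) ≤ 1 / 4 ∨ 3 / 4 ≤ (y i : ℝ)
    · apply hHb
      obtain ⟨i, hi⟩ := hy
      refine ⟨i, hi.imp (fun hi => Set.projIcc_of_le_left _ ?_)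
        (fun hi => Set.projIcc_of_right_le _ ?_)⟩
      · simp only [Set.Icc.coe_one]; linarith
      · simp only [Set.Icc.coe_one]; linarith
    · push Not at hy
      have : τ 1 y = 1 := by
        simp only [τ, one_mul]
        refine Finset.prod_eq_one fun i _ => Set.projIcc_of_right_le _ ?_
        have := hy i
        exact le_min (by linarith) (by linarith)
      simp [this]
  have hbz : H (0, b) = z := by simpa using hz b hb
  have h1 : φ.HomotopicRel ⟨fun y => H (τ 1 y, b), by fun_prop⟩ (Cube.boundary (Fin n)) := by
    refine ⟨⟨⟨⟨fun p => H (τ p.1 p.2, E p.1 p.2), by fun_prop⟩, ?_, ?_⟩, ?_⟩⟩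
    · intro y; simp [hE0, τ]
    · intro y; simp [hone]
    · intro t y hy
      simp only [ContinuousMap.coe_mk, hτb t y hy]
      rw [hHb _ _ (hEb t y hy), hbz, hz y hy]
  refine h1.trans ⟨⟨⟨⟨fun p => H (unitInterval.symm p.1 * τ 1 p.2, b), by fun_prop⟩, ?_, ?_⟩, ?_⟩⟩
  · intro y; simp
  · intro y; simp [hbz]
  · intro t y hy
    simp only [ContinuousMap.coe_mk, hτb _ y hy]
    simp

/-! ### Spheres lift to coverings -/

lemma cube_boundary_joined {n : ℕ} (hn : 2 ≤ n) {y : Fin n → I} (hy : y ∈ Cube.boundary (Fin n)) :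
    JoinedIn (Cube.boundary (Fin n)) y (fun _ => 0) := by
  obtain ⟨i, hi⟩ := hy
  -- first move all coordinates except the `i`-th one to zero, then the `i`-th one
  have : Nontrivial (Fin n) := Fin.nontrivial_iff_two_le.2 hn
  obtain ⟨k, hk⟩ := exists_ne i
  have h1 : JoinedIn (Cube.boundary (Fin n)) y (fun l => if l = i then y l else 0) := by
    refine ⟨⟨⟨fun t l => if l = i then y l else unitInterval.symm t * y l, ?_⟩, ?_, ?_⟩, ?_⟩
    · refine continuous_pi fun l => ?_
      split_ifs <;> fun_prop
    · funext l; simp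
    · funext l; simp
    · intro t
      exact ⟨i, by simpa using hi⟩
  refine h1.trans ⟨⟨⟨fun t l => if l = i then unitInterval.symm t * y l else 0, ?_⟩, ?_, ?_⟩, ?_⟩
  · refine continuous_pi fun l => ?_
    split_ifs <;> fun_prop
  · funext l; simp
  · funext l; simp
  · intro t
    exact ⟨k, by simp [hk]⟩

/-- A map from the cube of dimension at least two which is constant on the boundary lifts through a
covering map to a map which is constant on the boundary. -/
lemma exists_lift {n : ℕ} (hn : 2 ≤ n) {E B : Type*} [TopologicalSpace E] [TopologicalSpace B]
    {p : E → B} (hp : IsCoveringMap p) (hsurj : Function.Surjective p)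
    (φ : C(Fin n → I, B)) (hφ : BConst φ) :
    ∃ ψ : C(Fin n → I, E), (∀ y, p (ψ y) = φ y) ∧ BConst ψ := by
  -- the cube is contracted to a corner, and the contraction is lifted
  obtain ⟨e, he⟩ := hsurj (φ fun _ => 0)
  let H : C(I × (Fin n → I), B) := ⟨fun q => φ fun i => q.1 * q.2 i, by fun_prop⟩
  have H0 : ∀ a, H (0, a) = p ((ContinuousMap.const (Fin n → I) e) a) := by
    intro a; simp [H, he]
  let L := hp.liftHomotopy H (ContinuousMap.const _ e) H0
  have hL : ∀ q, p (L q) = H q := fun q => congr_fun (hp.liftHomotopy_lifts H _ H0) q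
  refine ⟨⟨fun y => L (1, y), by fun_prop⟩, fun y => by simp [hL, H], ?_⟩
  have key : ∀ y ∈ Cube.boundary (Fin n), L (1, y) = L (1, fun _ => 0) := by
    intro y hy
    obtain ⟨γ, hγ⟩ := cube_boundary_joined hn hy
    -- the lift along a path in the boundary is a lift of a constant path
    have hc : ∀ t, p (L (1, γ t)) = p (L (1, γ 0)) := by
      intro t
      rw [hL, hL]
      simpa [H] using hφ _ (hγ t) _ (by simpa using hy)
    have := hp.isSeparatedMap.const_of_comp hp.isLocalHomeomorph.isLocallyInjective
      (g := fun t : I => L (1, γ t)) (by fun_prop) (fun a a' => by rw [hc a, hc a']) 0 1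
    simpa using this
  intro y hy y' hy'
  exact (key y hy).trans (key y' hy').symm

/-! ### The tree of spaces covering the glued mapping tori -/

variable {X : Type*} [TopologicalSpace X] {m : ℕ}

/-- The cylinders of the covering space: for each element `w` of the free group and each `j`, a
cylinder `X × [0,1]`. -/
abbrev PreTree (X : Type*) (m : ℕ) : Type _ := Σ _ : FreeGroup (Fin m) × Fin m, X × I

/-- The relation generating the covering space: the cylinder `(w, j)` starts at the vertex space
`w` and ends, through `f j`, at the vertex space `of j * w`. -/
def TreeRel (f : Fin m → C(X, X)) (a b : PreTree X m) : Prop :=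
  (a.2.2 = 1 ∧ b.2.2 = 0 ∧ b.2.1 = f a.1.2 a.2.1 ∧ b.1.1 = of a.1.2 * a.1.1 ∧ b.1.2 = a.1.2) ∨
  (a.2.2 = 0 ∧ b.2.2 = 0 ∧ b.2.1 = a.2.1 ∧ b.1.1 = a.1.1)

/-- The covering space of the glued mapping tori which is pulled back from the universal cover of
the wedge of `m` circles: a tree of mapping cylinders. -/
def Tree (f : Fin m → C(X, X)) : Type _ := Quot (TreeRel f)

instance (f : Fin m → C(X, X)) : TopologicalSpace (Tree f) :=
  inferInstanceAs (TopologicalSpace (Quot _))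

/-- The quotient map from the disjoint union of the cylinders. -/
def toTree (f : Fin m → C(X, X)) (a : PreTree X m) : Tree f := Quot.mk _ a

lemma isQuotientMap_toTree (f : Fin m → C(X, X)) : Topology.IsQuotientMap (toTree f) :=
  isQuotientMap_quot_mk

lemma toTree_eq {f : Fin m → C(X, X)} {a b : PreTree X m} (h : TreeRel f a b) :
    toTree f a = toTree f b := Quot.sound h

/-- The point of height `t` over `x` in the cylinder `(w, j)`; values of `t` outside of `[0,1]` are
clamped, so that `cell f w j x 0` is the point `x` of the vertex space `w`, whatever `j` is. -/
noncomputable def cell (f : Fin m → C(X, X)) (w : FreeGroup (Fin m)) (j : Fin m) (x : X)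
    (t : ℝ) : Tree f :=
  toTree f ⟨(w, j), x, Set.projIcc 0 1 zero_le_one t⟩

variable (f : Fin m → C(X, X))

lemma cell_continuous (w : FreeGroup (Fin m)) (j : Fin m) :
    Continuous fun p : X × ℝ => cell f w j p.1 p.2 := by
  refine (isQuotientMap_toTree f).continuous.comp (continuous_sigmaMk.comp ?_)
  exact continuous_fst.prodMk (continuous_projIcc.comp continuous_snd)

lemma cell_continuous_comp {A : Type*} [TopologicalSpace A] (w : FreeGroup (Fin m)) (j : Fin m)
    {a : A → X} {b : A → ℝ} (ha : Continuous a) (hb : Continuous b) :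
    Continuous fun p => cell f w j (a p) (b p) :=
  (cell_continuous f w j).comp (ha.prodMk hb)

variable {f}

lemma cell_of_nonpos {t : ℝ} (ht : t ≤ 0) (w : FreeGroup (Fin m)) (j k : Fin m) (x : X) :
    cell f w j x t = cell f w k x 0 := by
  refine toTree_eq (Or.inr ⟨?_, ?_, rfl, rfl⟩)
  · exact Set.projIcc_of_le_left zero_le_one ht
  · exact Set.projIcc_of_le_left zero_le_one le_rfl

lemma cell_of_one_le {t : ℝ} (ht : 1 ≤ t) (w : FreeGroup (Fin m)) (j k : Fin m) (x : X) :
    cell f w j x t = cell f (of j * w) k (f j x) 0 := by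
  rw [← cell_of_nonpos le_rfl _ j k]
  refine toTree_eq (Or.inl ⟨?_, ?_, rfl, rfl, rfl⟩)
  · exact Set.projIcc_of_right_le zero_le_one ht
  · exact Set.projIcc_of_le_left zero_le_one le_rfl

lemma exists_cell (e : Tree f) : ∃ w j x t, 0 ≤ t ∧ t ≤ 1 ∧ e = cell f w j x t := by
  obtain ⟨⟨⟨w, j⟩, x, t⟩, rfl⟩ := (isQuotientMap_toTree f).surjective e
  exact ⟨w, j, x, t, t.2.1, t.2.2, by simp only [cell, Set.projIcc_val]⟩

/-- Continuous maps out of the tree of spaces, with parameters in `Y`, are glued from maps out of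
the cylinders. Local compactness of `Y` makes the product of the quotient map with `Y` a quotient
map. -/
lemma glue {Y Z : Type*} [TopologicalSpace Y] [LocallyCompactSpace Y] [TopologicalSpace Z]
    (f : Fin m → C(X, X))
    (B : FreeGroup (Fin m) → Fin m → X → ℝ → Y → Z)
    (hc : ∀ w j, Continuous fun q : X × ℝ × Y => B w j q.1 q.2.1 q.2.2)
    (h0 : ∀ w j k x y, B w j x 0 y = B w k x 0 y)
    (h1 : ∀ w j x y, B w j x 1 y = B (of j * w) j (f j x) 0 y) :
    ∃ Φ : C(Tree f × Y, Z), ∀ w j x t y, 0 ≤ t → t ≤ 1 → Φ (cell f w j x t, y) = B w j x t y := by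
  let F : Tree f → Y → Z := Quot.lift (fun a y => B a.1.1 a.1.2 a.2.1 a.2.2 y) (by
    rintro ⟨⟨w, j⟩, x, t⟩ ⟨⟨w', j'⟩, x', t'⟩ h
    funext y
    rcases h with ⟨ht, ht', hx, hw, hj⟩ | ⟨ht, ht', hx, hw⟩
    · dsimp only at ht ht' hx hw hj ⊢
      subst ht ht' hx hw hj
      simpa using h1 w _ x y
    · dsimp only at ht ht' hx hw ⊢
      subst ht ht' hx hw
      simpa using h0 _ j j' _ y)
  have hF : Continuous fun p : Tree f × Y => F p.1 p.2 := by
    refine isQuotientMap_quot_mk.continuous_lift_prod_left ?_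
    rw [← Homeomorph.sigmaProdDistrib.symm.comp_continuous_iff', continuous_sigma_iff]
    rintro ⟨w, j⟩
    exact (hc w j).comp (f := fun p : (X × I) × Y => (p.1.1, (p.1.2 : ℝ), p.2)) (by fun_prop)
  refine ⟨⟨_, hF⟩, fun w j x t y ht0 ht1 => ?_⟩
  simp only [ContinuousMap.coe_mk, F, cell, toTree, Set.projIcc_of_mem zero_le_one ⟨ht0, ht1⟩]

lemma glue_map {Z : Type*} [TopologicalSpace Z] (f : Fin m → C(X, X))
    (B : FreeGroup (Fin m) → Fin m → X → ℝ → Z)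
    (hc : ∀ w j, Continuous fun q : X × ℝ => B w j q.1 q.2)
    (h0 : ∀ w j k x, B w j x 0 = B w k x 0)
    (h1 : ∀ w j x, B w j x 1 = B (of j * w) j (f j x) 0) :
    ∃ Φ : C(Tree f, Z), ∀ w j x t, 0 ≤ t → t ≤ 1 → Φ (cell f w j x t) = B w j x t := by
  obtain ⟨Φ, hΦ⟩ := glue (Y := Unit) f (fun w j x t _ => B w j x t)
    (fun w j => (hc w j).comp (f := fun q : X × ℝ × Unit => (q.1, q.2.1)) (by fun_prop))
    (fun w j k x _ => h0 w j k x) (fun w j x _ => h1 w j x)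
  exact ⟨⟨fun e => Φ (e, ()), by fun_prop⟩, fun w j x t => hΦ w j x t ()⟩

/-- Homotopies out of the tree of spaces are glued from homotopies `B w j x t s` on the cylinders,
where `s` is the parameter of the homotopy. -/
lemma glue_homotopic {Z : Type*} [TopologicalSpace Z] {f : Fin m → C(X, X)}
    {φ ψ : C(Tree f, Z)}
    (B : FreeGroup (Fin m) → Fin m → X → ℝ → ℝ → Z)
    (hc : ∀ w j, Continuous fun q : X × ℝ × ℝ => B w j q.1 q.2.1 q.2.2)
    (h0 : ∀ w j k x s, 0 ≤ s → s ≤ 1 → B w j x 0 s = B w k x 0 s)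
    (h1 : ∀ w j x s, 0 ≤ s → s ≤ 1 → B w j x 1 s = B (of j * w) j (f j x) 0 s)
    (hφ : ∀ w j x t, 0 ≤ t → t ≤ 1 → φ (cell f w j x t) = B w j x t 0)
    (hψ : ∀ w j x t, 0 ≤ t → t ≤ 1 → ψ (cell f w j x t) = B w j x t 1) :
    φ.Homotopic ψ := by
  obtain ⟨Φ, hΦ⟩ := glue (Y := I) f (fun w j x t s => B w j x t s)
    (fun w j => (hc w j).comp (f := fun q : X × ℝ × I => (q.1, q.2.1, (q.2.2 : ℝ)))
      (by fun_prop))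
    (fun w j k x s => h0 w j k x s s.2.1 s.2.2) (fun w j x s => h1 w j x s s.2.1 s.2.2)
  refine ⟨⟨⟨fun p => Φ (p.2, p.1), by fun_prop⟩, ?_, ?_⟩⟩
  · intro e
    obtain ⟨w, j, x, t, ht0, ht1, rfl⟩ := exists_cell e
    simp [hΦ w j x t _ ht0 ht1, hφ w j x t ht0 ht1]
  · intro e
    obtain ⟨w, j, x, t, ht0, ht1, rfl⟩ := exists_cell e
    simp [hΦ w j x t _ ht0 ht1, hψ w j x t ht0 ht1]

/-! ### The covering map -/

/-- The free group acts on the tree of spaces by right translation of the indices. -/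
instance (f : Fin m → C(X, X)) : MulAction (FreeGroup (Fin m)) (Tree f) where
  smul g := Quot.map (fun a => ⟨(a.1.1 * g⁻¹, a.1.2), a.2⟩) (by
    rintro a b (⟨h1, h2, h3, h4, h5⟩ | ⟨h1, h2, h3, h4⟩)
    · exact Or.inl ⟨h1, h2, h3, by simp [h4, mul_assoc], h5⟩
    · exact Or.inr ⟨h1, h2, h3, by simp [h4]⟩)
  one_smul := by
    rintro ⟨a⟩
    exact congrArg (Quot.mk _) (by simp)
  mul_smul g h := by
    rintro ⟨a⟩
    exact congrArg (Quot.mk _) (by simp [mul_assoc])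

lemma smul_mk (g : FreeGroup (Fin m)) (a : PreTree X m) :
    g • toTree f a = toTree f ⟨(a.1.1 * g⁻¹, a.1.2), a.2⟩ := rfl

/-- The projection of the tree of spaces to the glued mapping tori. -/
def proj (f : Fin m → C(X, X)) : Tree f → GluedMappingTori (fun j => ⇑(f j)) :=
  Quot.map (fun a => (a.2.1, a.2.2, a.1.2)) (by
    rintro a b (⟨h1, h2, h3, h4, h5⟩ | ⟨h1, h2, h3, h4⟩)
    · exact Or.inl ⟨h1, h2, h3, h5⟩
    · exact Or.inr ⟨h1, h2, h3⟩)

/-- In the open star of a vertex space, the label of that vertex. -/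
noncomputable def starLabel (f : Fin m → C(X, X)) : Tree f → Option (FreeGroup (Fin m)) :=
  Quot.lift (fun a => if (a.2.2 : ℝ) < 1 / 2 then some a.1.1 else
    if 1 / 2 < (a.2.2 : ℝ) then some (of a.1.2 * a.1.1) else none) (by
    rintro a b (⟨h1, h2, h3, h4, h5⟩ | ⟨h1, h2, h3, h4⟩)
    · simp only [h1, h2, h4]; norm_num
    · simp only [h1, h2, h4]; norm_num)

/-- In the interior of a cylinder, the label of the vertex where the cylinder starts. -/
noncomputable def edgeLabel (f : Fin m → C(X, X)) : Tree f → Option (FreeGroup (Fin m)) :=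
  Quot.lift (fun a => if 0 < (a.2.2 : ℝ) ∧ (a.2.2 : ℝ) < 1 then some a.1.1 else none) (by
    rintro a b (⟨h1, h2, h3, h4, h5⟩ | ⟨h1, h2, h3, h4⟩)
    · simp [h1, h2]
    · simp [h1, h2])

lemma starLabel_smul (g : FreeGroup (Fin m)) (e : Tree f) :
    starLabel f (g • e) = (starLabel f e).map (· * g⁻¹) := by
  obtain ⟨a, rfl⟩ := (isQuotientMap_toTree f).surjective e
  rw [smul_mk]
  simp only [starLabel, toTree]
  split_ifs <;> simp [mul_assoc]

lemma edgeLabel_smul (g : FreeGroup (Fin m)) (e : Tree f) :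
    edgeLabel f (g • e) = (edgeLabel f e).map (· * g⁻¹) := by
  obtain ⟨a, rfl⟩ := (isQuotientMap_toTree f).surjective e
  rw [smul_mk]
  simp only [edgeLabel, toTree]
  split_ifs <;> simp

lemma isOpen_starLabel (w : FreeGroup (Fin m)) : IsOpen {e : Tree f | starLabel f e = some w} := by
  rw [← (isQuotientMap_toTree f).isOpen_preimage, isOpen_sigma_iff]
  rintro ⟨v, j⟩
  have : (Sigma.mk (v, j) ⁻¹' (toTree f ⁻¹' {e : Tree f | starLabel f e = some w}))
      = {q : X × I | ((q.2 : ℝ) < 1 / 2 ∧ v = w) ∨ (1 / 2 < (q.2 : ℝ) ∧ of j * v = w)} := by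
    ext ⟨x, t⟩
    change (if (t : ℝ) < 1 / 2 then some v else if 1 / 2 < (t : ℝ) then some (of j * v) else none)
      = some w ↔ ((t : ℝ) < 1 / 2 ∧ v = w) ∨ (1 / 2 < (t : ℝ) ∧ of j * v = w)
    split_ifs with h1 h2
    · simp only [h1, not_lt.2 h1.le, Option.some.injEq, true_and, false_and, or_false]
    · simp only [h1, h2, Option.some.injEq, true_and, false_and, false_or]
    · simp only [h1, h2, false_and, or_false]
  rw [this]
  have hc : Continuous fun q : X × I => (q.2 : ℝ) := by fun_prop
  exact ((isOpen_lt hc continuous_const).inter isOpen_const).union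
    ((isOpen_lt continuous_const hc).inter isOpen_const)

lemma isOpen_edgeLabel (w : FreeGroup (Fin m)) : IsOpen {e : Tree f | edgeLabel f e = some w} := by
  rw [← (isQuotientMap_toTree f).isOpen_preimage, isOpen_sigma_iff]
  rintro ⟨v, j⟩
  have : (Sigma.mk (v, j) ⁻¹' (toTree f ⁻¹' {e : Tree f | edgeLabel f e = some w}))
      = {q : X × I | (0 < (q.2 : ℝ) ∧ (q.2 : ℝ) < 1) ∧ v = w} := by
    ext ⟨x, t⟩
    change (if 0 < (t : ℝ) ∧ (t : ℝ) < 1 then some v else none) = some w ↔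
      (0 < (t : ℝ) ∧ (t : ℝ) < 1) ∧ v = w
    split_ifs with h1
    · simp [h1]
    · simp only [h1, false_and]
  rw [this]
  have hc : Continuous fun q : X × I => (q.2 : ℝ) := by fun_prop
  exact ((isOpen_lt continuous_const hc).inter (isOpen_lt hc continuous_const)).inter isOpen_const

/-- Points with equal labels are never distinct translates of each other. -/
lemma disjoint_of_label (L : Tree f → Option (FreeGroup (Fin m)))
    (hL : ∀ g e, L (g • e) = (L e).map (· * g⁻¹)) (w : FreeGroup (Fin m))
    (hw : IsOpen {e | L e = some w}) {e : Tree f} (he : L e = some w) :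
    ∃ U ∈ nhds e, ∀ g : FreeGroup (Fin m), ((g • ·) '' U ∩ U).Nonempty → g = 1 := by
  refine ⟨_, hw.mem_nhds he, ?_⟩
  rintro g ⟨_, ⟨a, ha, rfl⟩, hb⟩
  simp only [Set.mem_ofPred_eq] at ha hb
  rw [hL, ha] at hb
  simpa using hb

/-- Every chain of identifications in the glued mapping tori lifts to the tree of spaces. -/
lemma lift_eqvGen {a b : X × I × Fin m}
    (h : Relation.EqvGen (GluedToriRel fun j => ⇑(f j)) a b) (w : FreeGroup (Fin m)) :
    ∃ w', toTree f ⟨(w, a.2.2), a.1, a.2.1⟩ =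
      toTree f ⟨(w', b.2.2), b.1, b.2.1⟩ := by
  suffices H : (∀ w, ∃ w', toTree f ⟨(w, a.2.2), a.1, a.2.1⟩ =
      toTree f ⟨(w', b.2.2), b.1, b.2.1⟩) ∧ (∀ w, ∃ w',
      toTree f ⟨(w, b.2.2), b.1, b.2.1⟩ =
      toTree f ⟨(w', a.2.2), a.1, a.2.1⟩) from H.1 w
  clear w
  induction h with
  | rel a b h =>
    rcases h with ⟨h1, h2, h3, h4⟩ | ⟨h1, h2, h3⟩
    · refine ⟨fun w => ⟨of a.2.2 * w, toTree_eq (Or.inl ⟨h1, h2, h3, rfl, h4⟩)⟩,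
        fun w => ⟨(of a.2.2)⁻¹ * w, (toTree_eq (Or.inl ⟨h1, h2, h3, by simp, h4⟩)).symm⟩⟩
    · exact ⟨fun w => ⟨w, toTree_eq (Or.inr ⟨h1, h2, h3, rfl⟩)⟩,
        fun w => ⟨w, (toTree_eq (f := f) (a := ⟨(w, a.2.2), a.1, a.2.1⟩)
          (b := ⟨(w, b.2.2), b.1, b.2.1⟩) (Or.inr ⟨h1, h2, h3, rfl⟩)).symm⟩⟩
  | refl a => exact ⟨fun w => ⟨w, rfl⟩, fun w => ⟨w, rfl⟩⟩
  | symm a b _ ih => exact ih.symm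
  | trans a b c _ _ ih1 ih2 =>
    constructor
    · intro w
      obtain ⟨w1, h1⟩ := ih1.1 w
      obtain ⟨w2, h2⟩ := ih2.1 w1
      exact ⟨w2, h1.trans h2⟩
    · intro w
      obtain ⟨w1, h1⟩ := ih2.2 w
      obtain ⟨w2, h2⟩ := ih1.2 w1
      exact ⟨w2, h1.trans h2⟩

lemma isQuotientCoveringMap_proj (f : Fin m → C(X, X)) :
    IsQuotientCoveringMap (proj f) (FreeGroup (Fin m)) where
  toIsQuotientMap := by
    have h : Topology.IsQuotientMap
        (fun a : PreTree X m => ((a.2.1, a.2.2, a.1.2) : X × I × Fin m)) := by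
      refine IsOpenQuotientMap.isQuotientMap ⟨?_, ?_, ?_⟩
      · rintro ⟨x, t, j⟩
        exact ⟨⟨(1, j), x, t⟩, rfl⟩
      · refine continuous_sigma fun ⟨w, j⟩ => ?_
        fun_prop
      · rw [isOpenMap_sigma]
        rintro ⟨w, j⟩ U hU
        have : (fun q : X × I => ((q.1, q.2, j) : X × I × Fin m)) '' U =
            (fun q : X × I × Fin m => ((q.1, q.2.1) : X × I)) ⁻¹' U ∩ {q | q.2.2 = j} := by
          ext ⟨x, t, k⟩
          simp only [Set.mem_image, Prod.mk.injEq, Prod.exists, Set.mem_inter_iff,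
            Set.mem_preimage, Set.mem_ofPred_eq]
          constructor
          · rintro ⟨_, _, h, rfl, rfl, rfl⟩
            exact ⟨h, rfl⟩
          · rintro ⟨h, rfl⟩
            exact ⟨_, _, h, rfl, rfl, rfl⟩
        change IsOpen ((fun q : X × I => ((q.1, q.2, j) : X × I × Fin m)) '' U)
        rw [this]
        refine (hU.preimage (by fun_prop)).inter ?_
        exact (isOpen_discrete {j}).preimage (continuous_snd.comp continuous_snd)
    have h' : Topology.IsQuotientMap (proj f ∘ toTree f) :=
      (isQuotientMap_quot_mk (r := GluedToriRel fun j => ⇑(f j))).comp h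
    refine Topology.IsQuotientMap.of_comp (isQuotientMap_toTree f).continuous ?_ h'
    exact (isQuotientMap_toTree f).continuous_iff.2 h'.continuous
  continuous_const_smul g := by
    refine (isQuotientMap_toTree f).continuous_iff.2 ?_
    refine (isQuotientMap_toTree f).continuous.comp
      (f := fun a : PreTree X m => ⟨(a.1.1 * g⁻¹, a.1.2), a.2⟩) ?_
    refine continuous_sigma fun ⟨w, j⟩ => ?_
    exact @continuous_sigmaMk (FreeGroup (Fin m) × Fin m) (fun _ => X × I) _ (w * g⁻¹, j)
  apply_eq_iff_mem_orbit {e₁ e₂} := by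
    constructor
    · intro h
      obtain ⟨⟨⟨w, j⟩, x, t⟩, rfl⟩ := (isQuotientMap_toTree f).surjective e₁
      obtain ⟨⟨⟨w', j'⟩, x', t'⟩, rfl⟩ := (isQuotientMap_toTree f).surjective e₂
      obtain ⟨v, hv⟩ := lift_eqvGen (f := f) (Quot.eqvGen_exact h) w
      refine ⟨v⁻¹ * w', ?_⟩
      refine Eq.trans ?_ hv.symm
      simp [smul_mk]
    · rintro ⟨g, rfl⟩
      obtain ⟨a, rfl⟩ := (isQuotientMap_toTree f).surjective e₂
      rfl
  disjoint e := by
    by_cases h : ∃ w, starLabel f e = some w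
    · obtain ⟨w, hw⟩ := h
      exact disjoint_of_label _ starLabel_smul w (isOpen_starLabel w) hw
    · have : ∃ w, edgeLabel f e = some w := by
        obtain ⟨a, rfl⟩ := (isQuotientMap_toTree f).surjective e
        have h1 : ¬ (a.2.2 : ℝ) < 1 / 2 := fun h1 => h ⟨_, if_pos h1⟩
        have h2 : ¬ 1 / 2 < (a.2.2 : ℝ) := fun h2 => h ⟨_, (if_neg h1).trans (if_pos h2)⟩
        exact ⟨_, if_pos ⟨by linarith, by linarith⟩⟩
      obtain ⟨w, hw⟩ := this
      exact disjoint_of_label _ edgeLabel_smul w (isOpen_edgeLabel w) hw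

/-! ### Choices along the tree, and homotopies with a real parameter -/

/-- Objects `D w` attached to the vertices of the tree can be chosen along the edges, starting from
the root: from each end of an edge, an object extends to the other end. -/
lemma tree_choice {m : ℕ} {S : Type*} (V : FreeGroup (Fin m) → S → Prop)
    (R : FreeGroup (Fin m) → Fin m → S → S → Prop) (d0 : S) (h0 : V 1 d0)
    (fwd : ∀ w j d, V w d → ∃ d', V (of j * w) d' ∧ R w j d d')
    (bwd : ∀ w j d', V (of j * w) d' → ∃ d, V w d ∧ R w j d d') :
    ∃ D : FreeGroup (Fin m) → S,
      (∀ w, V w (D w)) ∧ ∀ w j, R w j (D w) (D (of j * w)) := by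
  have : Nonempty S := ⟨d0⟩
  choose! F hF hF' using fwd
  choose! G hG hG' using bwd
  -- extend from the root along words, one letter at a time
  let E : List (Fin m × Bool) → S := fun L => L.rec d0 fun a L d =>
    if a.2 then F (FreeGroup.mk L) a.1 d else G (FreeGroup.mk (a :: L)) a.1 d
  have hcons : ∀ (j : Fin m) L, FreeGroup.mk ((j, true) :: L) = of j * FreeGroup.mk L := by
    intro j L; simp [FreeGroup.of, FreeGroup.mul_mk]
  have hcons' : ∀ (j : Fin m) L, of j * FreeGroup.mk ((j, false) :: L) = FreeGroup.mk L := by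
    intro j L
    have : FreeGroup.mk ((j, false) :: L) = (of j)⁻¹ * FreeGroup.mk L := by
      simp [FreeGroup.of, FreeGroup.inv_mk, FreeGroup.invRev, FreeGroup.mul_mk]
    rw [this, mul_inv_cancel_left]
  have hE : ∀ L, V (FreeGroup.mk L) (E L) := by
    intro L
    induction L with
    | nil => exact h0
    | cons a L ih =>
      obtain ⟨j, b⟩ := a
      cases b
      · exact hG _ _ _ (by rw [hcons']; exact ih)
      · rw [hcons]
        exact hF _ _ _ ih
  refine ⟨fun w => E w.toWord, fun w => ?_, fun w j => ?_⟩
  · have := hE w.toWord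
    rwa [FreeGroup.mk_toWord] at this
  -- the reduced words of `w` and `of j * w` differ by one letter
  have key : (of j * w).toWord = (j, true) :: w.toWord ∨
      w.toWord = (j, false) :: (of j * w).toWord := by
    have h1 : (of j * w).toWord = FreeGroup.reduce ((j, true) :: w.toWord) := by
      conv_lhs => rw [← FreeGroup.mk_toWord (x := w), ← hcons, FreeGroup.toWord_mk]
    rw [FreeGroup.reduce.cons, FreeGroup.reduce_toWord] at h1
    cases hw : w.toWord with
    | nil => left; simpa [hw] using h1
    | cons a L =>
      rw [hw] at h1
      dsimp only at h1
      split_ifs at h1 with h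
      · right
        obtain ⟨k, b⟩ := a
        simp only [Bool.true_eq, Bool.not_eq_eq_eq_not, Bool.not_true] at h
        rw [h1, h.1, h.2]
      · left; exact h1
  have hw := hE w.toWord
  have hv := hE (of j * w).toWord
  rw [FreeGroup.mk_toWord] at hw hv
  rcases key with h | h
  · have := hF' w j _ hw
    simp only [h]
    simpa [E, FreeGroup.mk_toWord] using this
  · have := hG' w j _ hv
    have hEw : E w.toWord = G w j (E (of j * w).toWord) := by
      refine (congrArg E h).trans ?_
      change G (FreeGroup.mk ((j, false) :: (of j * w).toWord)) j _ = _
      rw [← h, FreeGroup.mk_toWord]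
    change R w j (E w.toWord) _
    rw [hEw]
    exact this

lemma comp_real {A Y Z : Type*} [TopologicalSpace A] [TopologicalSpace Y] [TopologicalSpace Z]
    {g : Y → ℝ → Z} (hg : Continuous fun p : Y × ℝ => g p.1 p.2) {a : A → Y} {b : A → ℝ}
    (ha : Continuous a) (hb : Continuous b) : Continuous fun p => g (a p) (b p) :=
  hg.comp (ha.prodMk hb)

/-- A homotopy, extended to a real parameter by constants. -/
lemma exists_real_homotopy {Y Z : Type*} [TopologicalSpace Y] [TopologicalSpace Z] {f g : C(Y, Z)}
    (h : f.Homotopic g) : ∃ H : Y → ℝ → Z, Continuous (fun p : Y × ℝ => H p.1 p.2) ∧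
      (∀ x t, t ≤ 0 → H x t = f x) ∧ ∀ x t, 1 ≤ t → H x t = g x := by
  obtain ⟨h⟩ := h
  refine ⟨fun x t => h (Set.projIcc 0 1 zero_le_one t, x), ?_, ?_, ?_⟩
  · exact h.continuous.comp ((continuous_projIcc.comp continuous_snd).prodMk continuous_fst)
  · intro x t ht; simp [Set.projIcc_of_le_left zero_le_one ht]
  · intro x t ht; simp [Set.projIcc_of_right_le zero_le_one ht]

/-- Along the tree, maps `r w` and `s w` are chosen which are homotopy inverse on one side and
compatible with the attaching maps up to homotopy: the identity at the root, and, across each edge,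
compositions with `f j` or with its homotopy inverse. -/
lemma exists_data {X : Type*} [TopologicalSpace X] {m : ℕ} (f : Fin m → C(X, X))
    (hf : ∀ j, ∃ g : C(X, X), (g.comp (f j)).Homotopic (ContinuousMap.id X) ∧
      ((f j).comp g).Homotopic (ContinuousMap.id X)) :
    ∃ r s : FreeGroup (Fin m) → C(X, X),
      (∀ w, (ContinuousMap.id X).Homotopic ((s w).comp (r w))) ∧
      (∀ w j, (r w).Homotopic ((r (of j * w)).comp (f j))) ∧
      ∀ w j, ((f j).comp (s w)).Homotopic (s (of j * w)) := by
  choose g hg hg' using hf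
  obtain ⟨D, hD, hR⟩ := tree_choice (S := C(X, X) × C(X, X))
    (V := fun _ d => (ContinuousMap.id X).Homotopic (d.2.comp d.1))
    (R := fun _ j d d' => d.1.Homotopic (d'.1.comp (f j)) ∧ ((f j).comp d.2).Homotopic d'.2)
    (ContinuousMap.id X, ContinuousMap.id X) (by exact .refl _)
    (by
      rintro - j ⟨r, s⟩ h
      refine ⟨(r.comp (g j), (f j).comp s), ?_, ?_, .refl _⟩
      · exact (hg' j).symm.trans (((ContinuousMap.Homotopic.refl (f j)).comp
          (h.comp (.refl (g j)))))
      · exact ((ContinuousMap.Homotopic.refl r).comp (hg j)).symm)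
    (by
      rintro - j ⟨r, s⟩ h
      refine ⟨(r.comp (f j), (g j).comp s), ?_, .refl _, ?_⟩
      · exact (hg j).symm.trans (((ContinuousMap.Homotopic.refl (g j)).comp
          (h.comp (.refl (f j)))))
      · exact (hg' j).comp (.refl s))
  exact ⟨fun w => (D w).1, fun w => (D w).2, hD, fun w j => (hR w j).1, fun w j => (hR w j).2⟩

/-! ### The tree is contractible -/

/-- The tree itself: all vertex spaces are points. -/
abbrev BaseTree (m : ℕ) : Type := Tree fun _ : Fin m => ContinuousMap.id Unit

/-- The vertices of the tree, where the index `j₀` plays no role. -/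
noncomputable def vtx {m : ℕ} (j₀ : Fin m) (w : FreeGroup (Fin m)) : BaseTree m :=
  cell _ w j₀ () 0

/-- The edges of the tree, as paths. -/
noncomputable def edge {m : ℕ} (j₀ : Fin m) (w : FreeGroup (Fin m)) (j : Fin m) :
    Path (vtx j₀ w) (vtx j₀ (of j * w)) where
  toFun t := cell _ w j () t
  continuous_toFun := cell_continuous_comp _ w j continuous_const continuous_subtype_val
  source' := cell_of_nonpos le_rfl w j j₀ ()
  target' := cell_of_one_le le_rfl w j j₀ ()

/-- Paths from all vertices to the root, compatible with the edges up to homotopy. -/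
lemma exists_paths {m : ℕ} (j₀ : Fin m) : ∃ c : ∀ w, Path (vtx j₀ w) (vtx j₀ 1),
    ∀ w j, ((edge j₀ w j).trans (c (of j * w))).Homotopic (c w) := by
  obtain ⟨D, hD, hR⟩ := tree_choice (S := Σ w, Path (vtx j₀ w) (vtx j₀ 1))
    (V := fun w d => d.1 = w)
    (R := fun w j d d' => ∃ c c', d = ⟨w, c⟩ ∧ d' = ⟨of j * w, c'⟩ ∧
      ((edge j₀ w j).trans c').Homotopic c) ⟨1, Path.refl _⟩ rfl
    (by
      rintro w j ⟨_, c⟩ rfl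
      refine ⟨⟨_, (edge j₀ _ j).symm.trans c⟩, rfl, c, _, rfl, rfl, ?_⟩
      refine Path.Homotopic.trans ⟨(Path.Homotopy.transAssoc _ _ _).symm⟩ ?_
      exact Path.Homotopic.trans ⟨(Path.Homotopy.reflTransSymm _).symm.hcomp (.refl c)⟩
        ⟨Path.Homotopy.reflTrans c⟩)
    (by
      rintro w j ⟨_, c⟩ rfl
      exact ⟨⟨w, (edge j₀ w j).trans c⟩, rfl, _, c, rfl, rfl, .refl _⟩)
  have hc : ∀ w, ∃ c, D w = ⟨w, c⟩ := by
    intro w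
    have := hD w
    cases h : D w with
    | mk a c =>
      rw [h] at this
      subst this
      exact ⟨c, rfl⟩
  choose c hc using hc
  refine ⟨c, fun w j => ?_⟩
  obtain ⟨c₁, c₂, h₁, h₂, h⟩ := hR w j
  rw [hc] at h₁ h₂
  obtain rfl : c w = c₁ := by simpa using h₁
  obtain rfl : c (of j * w) = c₂ := by simpa using h₂
  exact h

lemma baseTree_contract {m : ℕ} (j₀ : Fin m) :
    (ContinuousMap.id (BaseTree m)).Homotopic (ContinuousMap.const _ (vtx j₀ 1)) := by
  obtain ⟨c, hc⟩ := exists_paths j₀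
  obtain ⟨h⟩ : Nonempty (∀ w j, ((edge j₀ w j).trans (c (of j * w))).Homotopy (c w)) :=
    ⟨fun w j => (hc w j).some⟩
  let pr : ℝ → I := Set.projIcc 0 1 zero_le_one
  have hpr : Continuous pr := continuous_projIcc
  have pr0 : pr 0 = 0 := Set.projIcc_left _
  have pr1 : pr 1 = 1 := Set.projIcc_right _
  have hP0 : ∀ w j u, 0 ≤ u → u ≤ 1 →
      ((edge j₀ w j).trans (c (of j * w))) (pr (u / 2)) = cell _ w j () u := by
    intro w j u hu0 hu1
    have : pr (u / 2) = ⟨u / 2, by linarith, by linarith⟩ := Set.projIcc_of_mem _ _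
    rw [this, Path.trans_apply, dif_pos (by dsimp only; linarith)]
    change cell _ w j () (2 * (u / 2)) = _
    congr 1; ring
  have hP1 : ∀ w j s, 0 ≤ s → s ≤ 1 →
      ((edge j₀ w j).trans (c (of j * w))) (pr (1 / 2 + s / 2)) = c (of j * w) (pr s) := by
    intro w j s hs0 hs1
    have : pr (1 / 2 + s / 2) = ⟨1 / 2 + s / 2, by linarith, by linarith⟩ :=
      Set.projIcc_of_mem _ _
    rw [this, Path.trans_apply]
    have hs : pr s = ⟨s, hs0, hs1⟩ := Set.projIcc_of_mem _ _
    split_ifs with hlt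
    · obtain rfl : s = 0 := by
        dsimp only at hlt
        linarith
      have h1 : (⟨2 * (1 / 2 + 0 / 2), by norm_num, by norm_num⟩ : I) = 1 := by
        ext; norm_num
      simp only [h1, pr0, Path.target, Path.source]
    · rw [hs]
      congr 1
      ext
      simp only
      ring
  -- first shrink each edge to its second half, so that the first half stays at the beginning vertex
  obtain ⟨Φ, hΦ⟩ := glue_map (fun _ : Fin m => ContinuousMap.id Unit)
    (fun w j _ t => cell (fun _ : Fin m => ContinuousMap.id Unit) w j () (2 * t - 1))
    (fun w j => cell_continuous_comp _ w j (by fun_prop) (by fun_prop))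
    (fun w j k x => (cell_of_nonpos (by norm_num) w j j₀ _).trans
      (cell_of_nonpos (by norm_num) w k j₀ _).symm)
    (fun w j x => (cell_of_one_le (by norm_num) w j j₀ _).trans
      (cell_of_nonpos (by norm_num) _ j j₀ _).symm)
  refine ContinuousMap.Homotopic.trans (g := Φ) ?_ ?_
  · refine glue_homotopic (fun w j _ t s =>
      cell (fun _ : Fin m => ContinuousMap.id Unit) w j () ((1 - s) * t + s * (2 * t - 1)))
      (fun w j => cell_continuous_comp _ w j (by fun_prop) (by fun_prop)) ?_ ?_ ?_ ?_
    · intro w j k x s hs0 hs1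
      exact (cell_of_nonpos (by linarith) w j j₀ _).trans
        (cell_of_nonpos (by linarith) w k j₀ _).symm
    · intro w j x s hs0 hs1
      exact (cell_of_one_le (by linarith) w j j₀ _).trans
        (cell_of_nonpos (by linarith) _ j j₀ _).symm
    · intro w j x t _ _
      simp
    · intro w j x t ht0 ht1
      rw [hΦ w j x t ht0 ht1]
      simp
  -- then vertices move to the root along `c`, the second half of an edge moves along the edge and
  -- then along `c`, and the first half is used to interpolate between these paths
  · refine glue_homotopic (fun w j _ t s => if t ≤ 1 / 2 then h w j (pr (1 - 2 * t), pr s) else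
      ((edge j₀ w j).trans (c (of j * w))) (pr ((2 * t - 1) / 2 + s * (1 - (2 * t - 1) / 2))))
      (fun w j => ?_) ?_ ?_ ?_ ?_
    · refine Continuous.if_le (by fun_prop) (by fun_prop) (by fun_prop) (by fun_prop) ?_
      rintro ⟨x, t, s⟩ (rfl : t = 1 / 2)
      norm_num [pr0]
    · intro w j k x s _ _
      norm_num [pr1]
    · intro w j x s hs0 hs1
      have := hP1 w j s hs0 hs1
      norm_num [pr1]
      rw [← this]
      congr 2
      ring
    · intro w j x t ht0 ht1
      rw [hΦ w j x t ht0 ht1]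
      split_ifs with ht
      · rw [pr0, Path.Homotopy.source]
        exact cell_of_nonpos (by linarith) w j j₀ _
      · rw [← hP0 w j (2 * t - 1) (by linarith) (by linarith)]
        simp
    · intro w j x t ht0 ht1
      split_ifs with ht
      · simp [pr1]
      · simp [pr1]

/-! ### Self-maps of the tree of spaces with a left homotopy inverse -/

/-- A self-map of the tree of spaces which maps the first half of a cylinder onto the cylinder, and
the second half to the vertex space at its end, along loops `Λ w j x` at `f j x`, has a left homotopy
inverse: the map of the same form with the inverse loops. -/
lemma exists_left_inverse_of_loops {f : Fin m → C(X, X)} (φ : C(Tree f, Tree f))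
    (Λ : FreeGroup (Fin m) → Fin m → X → ℝ → X)
    (hΛ : ∀ w j, Continuous fun p : X × ℝ => Λ w j p.1 p.2)
    (hΛ0 : ∀ w j x t, t ≤ 0 → Λ w j x t = f j x)
    (hΛ1 : ∀ w j x t, 1 ≤ t → Λ w j x t = f j x)
    (hφ : ∀ w j x t, 0 ≤ t → t ≤ 1 → φ (cell f w j x t) =
      if t ≤ 1 / 2 then cell f w j x (2 * t) else cell f (of j * w) j (Λ w j x (2 * t - 1)) 0) :
    ∃ φ' : C(Tree f, Tree f), (φ'.comp φ).Homotopic (ContinuousMap.id _) := by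
  obtain ⟨φ', hφ'⟩ := glue_map f (fun w j x t => if t ≤ 1 / 2 then cell f w j x (2 * t) else
      cell f (of j * w) j (Λ w j x (2 - 2 * t)) 0) (fun w j => by
        refine Continuous.if_le (cell_continuous_comp _ w j (by fun_prop) (by fun_prop))
          (cell_continuous_comp _ _ j (comp_real (hΛ w j) (by fun_prop) (by fun_prop)) (by fun_prop))
          (by fun_prop) (by fun_prop) ?_
        rintro ⟨x, t⟩ (rfl : t = 1 / 2)
        rw [hΛ1 _ _ _ _ (by norm_num)]
        exact cell_of_one_le (by norm_num) w j j x)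
      (fun w j k x => by
        norm_num
        exact cell_of_nonpos le_rfl w j k x)
      (fun w j x => by norm_num [hΛ0])
  obtain ⟨μ, hμ⟩ := glue_map f (fun w j x t => cell f w j x (4 * t))
    (fun w j => cell_continuous_comp _ w j (by fun_prop) (by fun_prop))
    (fun w j k x => by
      rw [mul_zero]
      exact cell_of_nonpos le_rfl w j k x)
    (fun w j x => by
      rw [mul_zero]
      exact cell_of_one_le (by norm_num) w j j x)
  refine ⟨φ', ContinuousMap.Homotopic.trans (g := μ) ?_ ?_⟩
  -- the composition runs through the inverse of a loop and then through the loop; the parameter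
  -- of the loop is bounded from below by `s`, so that for `s = 1` only its endpoint is left
  · refine glue_homotopic (fun w j x t s => if t ≤ 1 / 4 then cell f w j x (4 * t) else
      cell f (of j * w) j (Λ w j x (max s (max (2 - 4 * t) (2 * t - 1)))) 0) ?_ ?_ ?_ ?_ ?_
    · intro w j
      refine Continuous.if_le (cell_continuous_comp _ w j (by fun_prop) (by fun_prop))
        (cell_continuous_comp _ _ j (comp_real (hΛ w j) (by fun_prop) (by fun_prop)) (by fun_prop))
        (by fun_prop) (by fun_prop) ?_
      rintro ⟨x, t, s⟩ (rfl : t = 1 / 4)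
      rw [hΛ1 _ _ _ _ (le_max_of_le_right (le_max_of_le_left (by norm_num)))]
      exact cell_of_one_le (by norm_num) w j j x
    · intro w j k x s _ _
      norm_num
      exact cell_of_nonpos le_rfl w j k x
    · intro w j x s _ _
      rw [hΛ1 _ _ _ _ (le_max_of_le_right (le_max_of_le_right (by norm_num)))]
      norm_num
    · intro w j x t ht0 ht1
      rw [ContinuousMap.comp_apply, hφ w j x t ht0 ht1]
      by_cases h2 : t ≤ 1 / 2
      · rw [if_pos h2, hφ' w j x _ (by linarith) (by linarith)]
        by_cases h4 : t ≤ 1 / 4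
        · rw [if_pos (by linarith), if_pos h4]
          congr 1; ring
        · rw [if_neg (by linarith), if_neg h4, max_eq_left (by linarith : 2 * t - 1 ≤ 2 - 4 * t),
            max_eq_right (by linarith)]
          congr 2; ring
      · rw [if_neg h2, hφ' _ j _ _ le_rfl zero_le_one, if_pos (by norm_num), if_neg (by linarith),
          max_eq_right (by linarith : 2 - 4 * t ≤ 2 * t - 1), max_eq_right (by linarith), mul_zero]
    · intro w j x t ht0 ht1
      rw [hμ w j x t ht0 ht1]
      split_ifs with h4
      · rfl
      · rw [hΛ1 _ _ _ _ (le_max_left _ _)]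
        exact cell_of_one_le (by linarith) w j j x
  · refine glue_homotopic (fun w j x t s => cell f w j x ((1 - s) * (4 * t) + s * t))
      (fun w j => cell_continuous_comp _ w j (by fun_prop) (by fun_prop)) ?_ ?_ ?_ ?_
    · intro w j k x s _ _
      simp only [mul_zero, add_zero]
      exact cell_of_nonpos le_rfl w j k x
    · intro w j x s hs0 hs1
      simp only [mul_zero, add_zero]
      exact cell_of_one_le (by linarith) w j j x
    · intro w j x t ht0 ht1
      rw [hμ w j x t ht0 ht1]
      simp
    · intro w j x t _ _
      simp

/-- A self-map `M` of the tree of spaces which covers the identity of the tree up to sliding along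
the edges, and is homotopic to the identity on the vertex space `w` by `θ w`, has a left homotopy
inverse: conjugating `h` by `θ` yields a map which is the identity on vertex spaces. -/
lemma exists_left_inverse {f : Fin m → C(X, X)} (M : C(Tree f, Tree f))
    (u : FreeGroup (Fin m) → X → X)
    (θ : FreeGroup (Fin m) → X → ℝ → X)
    (hθ : ∀ w, Continuous fun p : X × ℝ => θ w p.1 p.2)
    (hθ0 : ∀ w x t, t ≤ 0 → θ w x t = x)
    (hθ1 : ∀ w x t, 1 ≤ t → θ w x t = u w x)
    (h : FreeGroup (Fin m) → Fin m → X → ℝ → X)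
    (hh : ∀ w j, Continuous fun p : X × ℝ => h w j p.1 p.2)
    (hh0 : ∀ w j x t, t ≤ 0 → h w j x t = f j (u w x))
    (hh1 : ∀ w j x t, 1 ≤ t → h w j x t = u (of j * w) (f j x))
    (hM : ∀ w j x t, 0 ≤ t → t ≤ 1 → M (cell f w j x t) =
      if t ≤ 1 / 2 then cell f w j (u w x) (2 * t) else
        cell f (of j * w) j (h w j x (6 * t - 4)) 0) :
    ∃ φ' : C(Tree f, Tree f), (φ'.comp M).Homotopic (ContinuousMap.id _) := by
  -- for `s = 0` this is a loop at `f j x`, following `f j ∘ θ w`, `h`, and the inverse of `θ`;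
  -- for `s = 1` only `h` remains
  let N : FreeGroup (Fin m) → Fin m → X → ℝ → ℝ → X := fun w j x t s =>
    if t ≤ 1 / 3 then f j (θ w x (max s (3 * t))) else
      if t ≤ 2 / 3 then h w j x (3 * t - 1) else θ (of j * w) (f j x) (max s (3 - 3 * t))
  have hN : ∀ w j, Continuous fun p : X × ℝ × ℝ => N w j p.1 p.2.1 p.2.2 := by
    intro w j
    refine Continuous.if_le ((f j).continuous.comp (comp_real (hθ w) (by fun_prop) (by fun_prop)))
      (Continuous.if_le (comp_real (hh w j) (by fun_prop) (by fun_prop))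
        (comp_real (hθ _) (by fun_prop) (by fun_prop)) (by fun_prop) (by fun_prop) ?_)
      (by fun_prop) (by fun_prop) ?_
    · rintro ⟨x, t, s⟩ (rfl : t = 2 / 3)
      rw [hh1 _ _ _ _ (by norm_num), hθ1 _ _ _ (le_max_of_le_right (by norm_num))]
    · rintro ⟨x, t, s⟩ (rfl : t = 1 / 3)
      norm_num [hh0]
      rw [hθ1 _ _ _ (le_max_right _ _)]
  have hNc : ∀ {A : Type _} [TopologicalSpace A] (w : FreeGroup (Fin m)) (j : Fin m)
      {a : A → X} {b c : A → ℝ}, Continuous a → Continuous b → Continuous c →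
      Continuous fun p => N w j (a p) (b p) (c p) :=
    fun w j _ _ _ ha hb hc => (hN w j).comp (ha.prodMk (hb.prodMk hc))
  have hN0 : ∀ w j x t s, t ≤ 0 → N w j x t s = f j (θ w x (max s (3 * t))) := fun w j x t s ht =>
    if_pos (by linarith)
  have hN1 : ∀ w j x t s, 1 ≤ t → N w j x t s = θ (of j * w) (f j x) (max s (3 - 3 * t)) :=
    fun w j x t s ht => (if_neg (by linarith)).trans (if_neg (by linarith))
  have hN' : ∀ w j x t, N w j x t 1 = h w j x (3 * t - 1) := by
    intro w j x t
    simp only [N]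
    split_ifs with h1 h2
    · rw [hθ1 _ _ _ (le_max_left _ _), hh0 _ _ _ _ (by linarith)]
    · rfl
    · rw [hθ1 _ _ _ (le_max_left _ _), hh1 _ _ _ _ (by linarith)]
  obtain ⟨φ, hφ⟩ := glue_map f (fun w j x t => if t ≤ 1 / 2 then cell f w j x (2 * t) else
      cell f (of j * w) j (N w j x (2 * t - 1) 0) 0) (fun w j => by
        refine Continuous.if_le (cell_continuous_comp _ w j (by fun_prop) (by fun_prop))
          (cell_continuous_comp _ _ j (hNc w j (by fun_prop) (by fun_prop) (by fun_prop))
            (by fun_prop)) (by fun_prop) (by fun_prop) ?_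
        rintro ⟨x, t⟩ (rfl : t = 1 / 2)
        rw [hN0 _ _ _ _ _ (by norm_num), hθ0 _ _ _ (by norm_num)]
        exact cell_of_one_le (by norm_num) w j j x)
      (fun w j k x => by
        norm_num
        exact cell_of_nonpos le_rfl w j k x)
      (fun w j x => by
        rw [hN1 _ _ _ _ _ (by norm_num), hθ0 _ _ _ (by norm_num)]
        norm_num)
  obtain ⟨φ', hφ'⟩ := exists_left_inverse_of_loops φ (fun w j x t => N w j x t 0)
    (fun w j => hNc w j (by fun_prop) (by fun_prop) (by fun_prop))
    (fun w j x t ht => by rw [hN0 _ _ _ _ _ ht, hθ0 _ _ _ (max_le le_rfl (by linarith))])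
    (fun w j x t ht => by rw [hN1 _ _ _ _ _ ht, hθ0 _ _ _ (max_le le_rfl (by linarith))]) hφ
  refine ⟨φ', ContinuousMap.Homotopic.trans ?_ hφ'⟩
  refine (ContinuousMap.Homotopic.refl φ').comp (ContinuousMap.Homotopic.symm ?_)
  refine glue_homotopic (fun w j x t s => if t ≤ 1 / 2 then cell f w j (θ w x (max s 0)) (2 * t)
    else cell f (of j * w) j (N w j x (2 * t - 1) s) 0) ?_ ?_ ?_ ?_ ?_
  · intro w j
    refine Continuous.if_le (cell_continuous_comp _ w j
      (comp_real (hθ w) (by fun_prop) (by fun_prop)) (by fun_prop)) (cell_continuous_comp _ _ j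
        (hNc w j (by fun_prop) (by fun_prop) (by fun_prop)) (by fun_prop))
      (by fun_prop) (by fun_prop) ?_
    rintro ⟨x, t, s⟩ (rfl : t = 1 / 2)
    rw [hN0 _ _ _ _ _ (by norm_num)]
    norm_num
    exact cell_of_one_le le_rfl w j j _
  · intro w j k x s _ _
    norm_num
    exact cell_of_nonpos le_rfl w j k _
  · intro w j x s _ _
    rw [hN1 _ _ _ _ _ (by norm_num)]
    norm_num
  · intro w j x t ht0 ht1
    rw [hφ w j x t ht0 ht1, hθ0 _ _ _ (by simp)]
  · intro w j x t ht0 ht1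
    rw [hM w j x t ht0 ht1, hθ1 _ _ _ (by simp), hN']
    congr 3
    ring

/-! ### Spheres in the tree of spaces -/

/-- If spheres in `X` are null-homotopic, then so are spheres in the tree of spaces: the sphere is
replaced by its components in the tree and in `X`, both of which can be contracted, and the error
of this replacement is the self-map `M`, which has a left homotopy inverse. -/
lemma freeNull_tree {n : ℕ} (f : Fin m → C(X, X))
    (hf : ∀ j, ∃ g : C(X, X), (g.comp (f j)).Homotopic (ContinuousMap.id X) ∧
      ((f j).comp g).Homotopic (ContinuousMap.id X))
    (hX : ∀ α : C(Fin n → I, X), BConst α → FreeNull α) (j₀ : Fin m)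
    (ψ : C(Fin n → I, Tree f)) (hψ : BConst ψ) : FreeNull ψ := by
  obtain ⟨r, s, hθ, hζ, hξ⟩ := exists_data f hf
  choose θ θc θ0 θ1 using fun w => exists_real_homotopy (hθ w)
  choose ζ ζc ζ0 ζ1 using fun w j => exists_real_homotopy (hζ w j)
  choose ξ ξc ξ0 ξ1 using fun w j => exists_real_homotopy (hξ w j)
  simp only [ContinuousMap.id_apply, ContinuousMap.comp_apply] at θ0 θ1 ζ0 ζ1 ξ0 ξ1
  -- the two components of the map from the tree of spaces to the product of the tree and `X`
  obtain ⟨ρ, hρ⟩ := glue_map f (fun w j x t => ζ w j x (6 * t - 4))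
    (fun w j => comp_real (ζc w j) (by fun_prop) (by fun_prop))
    (fun w j k x => by rw [ζ0 _ _ _ _ (by norm_num), ζ0 _ _ _ _ (by norm_num)])
    (fun w j x => by rw [ζ1 _ _ _ _ (by norm_num), ζ0 _ _ _ _ (by norm_num)])
  obtain ⟨π, hπ⟩ := glue_map f
    (fun w j _ t => cell (fun _ : Fin m => ContinuousMap.id Unit) w j () t)
    (fun w j => cell_continuous_comp _ w j (by fun_prop) (by fun_prop))
    (fun w j k x => cell_of_nonpos le_rfl w j k ())
    (fun w j x => cell_of_one_le le_rfl w j j ())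
  let α : C(Fin n → I, X) := ρ.comp ψ
  have hα : BConst α := fun y hy y' hy' => congrArg ρ (hψ y hy y' hy')
  -- the map back to the tree of spaces
  obtain ⟨S, hS⟩ := glue (Y := Fin n → I) (fun _ : Fin m => ContinuousMap.id Unit)
    (fun w j _ t c => if t ≤ 1 / 2 then cell f w j (s w (α c)) (2 * t) else
      cell f (of j * w) j (ξ w j (α c) (6 * t - 4)) 0)
    (fun w j => by
      refine Continuous.if_le (cell_continuous_comp _ w j (by fun_prop) (by fun_prop))
        (cell_continuous_comp _ _ j (comp_real (ξc w j) (by fun_prop) (by fun_prop)) (by fun_prop))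
        (by fun_prop) (by fun_prop) ?_
      rintro ⟨x, t, c⟩ (rfl : t = 1 / 2)
      rw [ξ0 _ _ _ _ (by norm_num)]
      exact cell_of_one_le (by norm_num) w j j _)
    (fun w j k x c => by
      norm_num
      exact cell_of_nonpos le_rfl w j k _)
    (fun w j x c => by norm_num [ξ1])
  -- the composition of both, with the sphere `ψ` replaced by an arbitrary point
  obtain ⟨M, hM⟩ := glue_map f
    (fun w j x t => if t ≤ 1 / 2 then cell f w j (s w (r w x)) (2 * t) else
      cell f (of j * w) j (ξ w j (ζ w j x (6 * t - 4)) (6 * t - 4)) 0)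
    (fun w j => by
      refine Continuous.if_le (cell_continuous_comp _ w j (by fun_prop) (by fun_prop))
        (cell_continuous_comp _ _ j (comp_real (ξc w j)
          (comp_real (ζc w j) (by fun_prop) (by fun_prop)) (by fun_prop)) (by fun_prop)) (by fun_prop) (by fun_prop) ?_
      rintro ⟨x, t⟩ (rfl : t = 1 / 2)
      rw [ξ0 _ _ _ _ (by norm_num), ζ0 _ _ _ _ (by norm_num)]
      exact cell_of_one_le (by norm_num) w j j _)
    (fun w j k x => by
      norm_num
      exact cell_of_nonpos le_rfl w j k _)
    (fun w j x => by norm_num [ξ1, ζ1])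
  have hMS : ∀ c, M (ψ c) = S (π (ψ c), c) := by
    intro c
    have hαc : α c = ρ (ψ c) := rfl
    obtain ⟨w, j, x, t, ht0, ht1, he⟩ := exists_cell (ψ c)
    rw [he] at hαc ⊢
    rw [hρ w j x t ht0 ht1] at hαc
    rw [hM w j x t ht0 ht1, hπ w j x t ht0 ht1, hS w j _ t c ht0 ht1, hαc]
    split_ifs with h2
    · rw [ζ0 _ _ _ _ (by linarith)]
    · rfl
  have hSα : ∀ e c c', α c = α c' → S (e, c) = S (e, c') := by
    intro e c c' h
    obtain ⟨w, j, x, t, ht0, ht1, rfl⟩ := exists_cell e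
    rw [hS w j _ t c ht0 ht1, hS w j _ t c' ht0 ht1, h]
  -- contract the tree: the sphere moves into a vertex space
  have hMψ : FreeNull (M.comp ψ) := by
    obtain ⟨H⟩ := baseTree_contract j₀
    let ι : C(X, Tree f) :=
      ⟨fun x => cell f 1 j₀ (s 1 x) 0, cell_continuous_comp _ _ _ (by fun_prop) (by fun_prop)⟩
    refine FreeNull.of_homotopicWith (ψ := ι.comp α) ?_ ((hX α hα).map ι)
    refine ⟨⟨⟨⟨fun p => S (H (p.1, π (ψ p.2)), p.2), by fun_prop⟩, ?_, ?_⟩, ?_⟩⟩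
    · intro c
      simp [hMS]
    · intro c
      change S (H (1, π (ψ c)), c) = cell f 1 j₀ (s 1 (α c)) 0
      rw [H.apply_one, ContinuousMap.const_apply, vtx, hS _ _ _ _ _ le_rfl zero_le_one]
      norm_num
    · intro t y hy y' hy'
      simp only [ContinuousMap.coe_mk, hψ y hy y' hy']
      exact hSα _ _ _ (hα y hy y' hy')
  obtain ⟨φ', hφ'⟩ := exists_left_inverse M (fun w x => s w (r w x)) θ θc θ0 θ1
    (fun w j x t => ξ w j (ζ w j x t) t)
    (fun w j => comp_real (ξc w j) (comp_real (ζc w j) continuous_fst continuous_snd) continuous_snd)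
    (fun w j x t ht => by rw [ξ0 _ _ _ _ ht, ζ0 _ _ _ _ ht])
    (fun w j x t ht => by rw [ξ1 _ _ _ _ ht, ζ1 _ _ _ _ ht]) hM
  exact FreeNull.of_homotopicWith (homotopicWith_comp hφ'.symm hψ) (hMψ.map φ')

end GluedTori

/-- If `X` is a path-connected aspherical topological space and
`f 1, …, f m : X → X` are continuous maps, each of which is a homotopy equivalence, then the
space `K` obtained by gluing the mapping tori of the `f j` along `X × {0}` is aspherical. -/
theorem gluedMappingTori_aspherical {X : Type*} [TopologicalSpace X] [PathConnectedSpace X]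
    (hX : Aspherical X) {m : ℕ} (f : Fin m → C(X, X))
    (hf : ∀ j, ∃ g : C(X, X), (g.comp (f j)).Homotopic (ContinuousMap.id X) ∧
      ((f j).comp g).Homotopic (ContinuousMap.id X)) :
    Aspherical (GluedMappingTori (fun j => ⇑(f j))) := by
  intro z i hi
  obtain ⟨z', rfl⟩ := Quot.exists_rep z
  have j₀ : Fin m := z'.2.2
  set z : GluedMappingTori (fun j => ⇑(f j)) := Quot.mk _ z'
  -- spheres in `X` are null-homotopic
  have hnull : ∀ α : C(Fin i → I, X), GluedTori.BConst α → GluedTori.FreeNull α := by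
    intro α hα
    let x := α fun _ => 0
    have h0 : (fun _ => 0 : Fin i → I) ∈ Cube.boundary (Fin i) := ⟨⟨0, by omega⟩, Or.inl rfl⟩
    let α' : GenLoop (Fin i) X x := ⟨α, fun y hy => hα y hy _ h0⟩
    have := hX x i hi
    have h : GenLoop.Homotopic α' GenLoop.const :=
      Quotient.exact (Subsingleton.elim (α := HomotopyGroup (Fin i) X x) ⟦α'⟧ ⟦GenLoop.const⟧)
    obtain ⟨H⟩ := h
    refine ⟨x, ⟨⟨H.toHomotopy, fun t y hy y' hy' => ?_⟩⟩⟩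
    exact (H.eq_fst t hy).trans ((hα y hy y' hy').trans (H.eq_fst t hy').symm)
  -- spheres in the glued mapping tori are lifted to the tree of spaces
  have key : ∀ φ : GenLoop (Fin i) (GluedMappingTori fun j => ⇑(f j)) z,
      GenLoop.Homotopic φ GenLoop.const := by
    intro φ
    have hp := GluedTori.isQuotientCoveringMap_proj f
    obtain ⟨ψ, hψφ, hψ⟩ := GluedTori.exists_lift hi hp.isCoveringMap hp.surjective φ.1
      (fun y hy y' hy' => (φ.2 y hy).trans (φ.2 y' hy').symm)
    have h := (GluedTori.freeNull_tree f hf hnull j₀ ψ hψ).map ⟨GluedTori.proj f, hp.continuous⟩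
    have hφ : (ContinuousMap.comp ⟨GluedTori.proj f, hp.continuous⟩ ψ) = φ.1 :=
      ContinuousMap.ext hψφ
    rw [hφ] at h
    exact h.homotopicRel (by omega) φ.2
  refine ⟨fun a b => ?_⟩
  obtain ⟨φ, rfl⟩ := Quotient.exists_rep a
  obtain ⟨φ', rfl⟩ := Quotient.exists_rep b
  exact Quotient.sound ((key φ).trans (key φ').symm)
end

section
/- Let r ≥ 0 and let p, q ≥ 1 be integers with gcd(p,q) = 1. Let G = 𝔽_r * (ℤ/pℤ) * (ℤ/qℤ) be the free product of the free group of rank r with the cyclic groups of orders p and q, and let π : G → ℤ/pqℤ be the composition of the abelianization map G → G^{ab} ≅ ℤ^r × ℤ/pℤ × ℤ/qℤ ≅ ℤ^r × ℤ/pqℤ with the projection onto the torsion subgroup ℤ/pqℤ. Then π is surjective and its kernel is a free group of rank pqr + (p−1)(q−1). -/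
/-!
Write `A = ℤ/pℤ`, `B = ℤ/qℤ`, `Q = A × B` and `G = 𝔽_r * A * B`. Up to the Chinese remainder
isomorphism, `π` is the map `G → Q` that kills `𝔽_r` and is the inclusion on `A` and on `B`. The
argument is Reidemeister–Schreier rewriting for the section `s (a, b) = a * b` of this map. The
Schreier generators of the kernel are `s x⁻¹ * xᵢ * s x` for `x : Q`, `i < r`, and
`(a * b)⁻¹ * (b * a)` for `a ≠ 1` in `A`, `b ≠ 1` in `B`; there are `pqr + (p - 1)(q - 1)` of them.

Let `F` be the free group on symbols for these generators and `ψ : F → G` the evaluation map.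
The rewriting process is a homomorphism `Φ : G → F ≀ᵣ Q` (`rewriting`) into the regular wreath
product, which is easy to define since `G` is a free product: `A` goes to the complement `Q`
of the wreath product, `B` goes to a conjugate of its copy in `Q`, and `xᵢ` goes into the base.
* `mapLeft_comp_rewriting`: composing `Φ` with `ψ` on the base gives the homomorphism
  `g ↦ (x ↦ s x⁻¹ * g * s ((π g)⁻¹ * x), π g)`, as can be checked on generators. At `x = 1` this
  says that `ψ (Φ(g)₁) = g` for `g` in the kernel, where `Φ(g)₁` is the base component of `Φ g`
  at `1`.
* `rewriting_evalHom`: `Φ (ψ w)₁ = w` for `w : F`, again by a check on generators.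
So `ψ` is an isomorphism from `F` onto the kernel of `π` (`kerEquiv`).
-/

/-!
Statement 6: For `G = 𝔽_r * ℤ/pℤ * ℤ/qℤ` with `gcd(p,q) = 1`, the composition of the
abelianization with the projection onto the torsion `ℤ/pqℤ` is surjective with kernel a
free group of rank `pqr + (p−1)(q−1)`.
-/

open Monoid

noncomputable section

/-- The free product `𝔽_r * ℤ/pℤ * ℤ/qℤ` of the free group of rank `r` and the cyclic groups
of orders `p` and `q`. -/
abbrev FreeProdFreeCyclicCyclic (r p q : ℕ) : Type :=
  Coprod (Coprod (FreeGroup (Fin r)) (Multiplicative (ZMod p))) (Multiplicative (ZMod q))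

/-- The inclusion `ℤ/pℤ → ℤ/pqℤ` obtained from the inverse of the Chinese remainder
isomorphism `ℤ/pqℤ ≅ ℤ/pℤ × ℤ/qℤ` (written multiplicatively). -/
def cyclicFactorInl (p q : ℕ) (h : Nat.Coprime p q) :
    Multiplicative (ZMod p) →* Multiplicative (ZMod (p * q)) :=
  AddMonoidHom.toMultiplicative
    (((ZMod.chineseRemainder h).symm.toAddEquiv.toAddMonoidHom).comp
      (AddMonoidHom.inl (ZMod p) (ZMod q)))

/-- The inclusion `ℤ/qℤ → ℤ/pqℤ` obtained from the inverse of the Chinese remainder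
isomorphism `ℤ/pqℤ ≅ ℤ/pℤ × ℤ/qℤ` (written multiplicatively). -/
def cyclicFactorInr (p q : ℕ) (h : Nat.Coprime p q) :
    Multiplicative (ZMod q) →* Multiplicative (ZMod (p * q)) :=
  AddMonoidHom.toMultiplicative
    (((ZMod.chineseRemainder h).symm.toAddEquiv.toAddMonoidHom).comp
      (AddMonoidHom.inr (ZMod p) (ZMod q)))

/-- The composition `π : 𝔽_r * ℤ/pℤ * ℤ/qℤ → ℤ/pqℤ` of the abelianization
`G → G^{ab} ≅ ℤ^r × ℤ/pℤ × ℤ/qℤ` with the projection onto the torsion subgroup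
`ℤ/pℤ × ℤ/qℤ ≅ ℤ/pqℤ`:  it kills the free factor `𝔽_r` and restricts to the canonical
inclusions on the two cyclic factors. -/
def torsionProjection (r p q : ℕ) (h : Nat.Coprime p q) :
    FreeProdFreeCyclicCyclic r p q →* Multiplicative (ZMod (p * q)) :=
  Coprod.lift (Coprod.lift 1 (cyclicFactorInl p q h)) (cyclicFactorInr p q h)

namespace ReidemeisterSchreier

open scoped Classical

/-- A homomorphism `D → E` induces a homomorphism of regular wreath products, applied pointwise
on the base. -/
def mapLeft {D E Q : Type*} [Group D] [Group E] [Group Q] (f : D →* E) : D ≀ᵣ Q →* E ≀ᵣ Q where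
  toFun w := ⟨fun x => f (w.left x), w.right⟩
  map_one' := by ext <;> simp
  map_mul' a b := by ext <;> simp

/-- The inclusion of the base `Q → D` into the regular wreath product. -/
def base (D Q : Type*) [Group D] [Group Q] : (Q → D) →* D ≀ᵣ Q where
  toFun f := ⟨f, 1⟩
  map_one' := rfl
  map_mul' a b := by ext <;> simp

/-- The Kaloujnine–Krasner homomorphism attached to `π : G → Q` and a map `s : Q → G`, which
in the application is a section of `π`. -/
def krasner {G Q : Type*} [Group G] [Group Q] (π : G →* Q) (s : Q → G) : G →* G ≀ᵣ Q where
  toFun g := ⟨fun x => (s x)⁻¹ * g * s ((π g)⁻¹ * x), π g⟩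
  map_one' := by ext <;> simp
  map_mul' a b := by ext <;> simp [mul_assoc]

variable (I A B : Type*) [Group A] [Group B]

/-- The free product `F(I) * A * B`. -/
abbrev FreeProd : Type _ := Coprod (Coprod (FreeGroup I) A) B

/-- The projection `F(I) * A * B → A × B`. -/
def proj : FreeProd I A B →* A × B :=
  Coprod.lift (Coprod.lift 1 (MonoidHom.inl A B)) (MonoidHom.inr A B)

/-- Index set of the Schreier generators: `inl (x, i)` stands for `s x⁻¹ * xᵢ * s x` and
`inr (a, b)` for `(a * b)⁻¹ * (b * a)`. -/
abbrev Index : Type _ := ((A × B) × I) ⊕ ({a : A // a ≠ 1} × {b : B // b ≠ 1})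

variable {I A B}

/-- The inclusion of `A` into `F(I) * A * B`. -/
def inA : A →* FreeProd I A B := Coprod.inl.comp Coprod.inr

/-- The inclusion of `B` into `F(I) * A * B`. -/
def inB : B →* FreeProd I A B := Coprod.inr

/-- The generator of `F(I) * A * B` with index `i`. -/
def gen (i : I) : FreeProd I A B := Coprod.inl (Coprod.inl (FreeGroup.of i))

@[simp] lemma proj_inA (a : A) : proj I A B (inA a) = (a, 1) := by simp [proj, inA]
@[simp] lemma proj_inB (b : B) : proj I A B (inB b) = (1, b) := by simp [proj, inB]
@[simp] lemma proj_gen (i : I) : proj I A B (gen i) = 1 := by simp [proj, gen]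

lemma hom_ext {M : Type*} [Group M] {f g : FreeProd I A B →* M}
    (h₁ : ∀ i, f (gen i) = g (gen i)) (h₂ : ∀ a, f (inA a) = g (inA a))
    (h₃ : ∀ b, f (inB b) = g (inB b)) : f = g := by
  refine Coprod.hom_ext (Coprod.hom_ext (FreeGroup.ext_hom _ _ h₁) ?_) ?_
  · exact MonoidHom.ext h₂
  · exact MonoidHom.ext h₃

/-- The section `(a, b) ↦ a * b` of `proj`. -/
def sec (x : A × B) : FreeProd I A B := inA x.1 * inB x.2

@[simp] lemma proj_sec (x : A × B) : proj I A B (sec x) = x := by simp [sec]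

/-- The symbol for `(a * b)⁻¹ * (b * a)`, which is trivial when `a = 1` or `b = 1`. -/
def commSymbol (x : A × B) : FreeGroup (Index I A B) :=
  if h : x.1 ≠ 1 ∧ x.2 ≠ 1 then FreeGroup.of (Sum.inr (⟨x.1, h.1⟩, ⟨x.2, h.2⟩)) else 1

@[simp] lemma commSymbol_one_left (b : B) : (commSymbol (1, b) : FreeGroup (Index I A B)) = 1 := by
  simp [commSymbol]

@[simp] lemma commSymbol_one_right (a : A) : (commSymbol (a, 1) : FreeGroup (Index I A B)) = 1 := by
  simp [commSymbol]

/-- Evaluation of the symbols for the Schreier generators. -/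
def evalHom : FreeGroup (Index I A B) →* FreeProd I A B :=
  FreeGroup.lift (Sum.elim (fun y => (sec y.1)⁻¹ * gen y.2 * sec y.1)
    (fun y => (sec (y.1.1, y.2.1))⁻¹ * (inB y.2.1 * inA y.1.1)))

lemma evalHom_commSymbol (x : A × B) :
    evalHom (commSymbol x : FreeGroup (Index I A B)) = (sec x)⁻¹ * (inB x.2 * inA x.1) := by
  obtain ⟨a, b⟩ := x
  by_cases ha : a = 1
  · subst ha; simp [sec]
  by_cases hb : b = 1
  · subst hb; simp [sec]
  simp [commSymbol, ha, hb, evalHom]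

lemma proj_evalHom (w : FreeGroup (Index I A B)) : proj I A B (evalHom w) = 1 := by
  have : (proj I A B).comp evalHom = 1 := by
    ext y : 1
    rcases y with y | y <;> simp [evalHom]
  exact DFunLike.congr_fun this w

/-- The rewriting process. The image of `b : B` is the conjugate by `commSymbol` of its copy in
`A × B`; its base component is forced by the requirement `mapLeft_comp_rewriting`, since
`s x⁻¹ * b * s (b⁻¹ * x)` is the product of `commSymbol x` and `(commSymbol (b⁻¹ * x))⁻¹`. -/
def rewriting : FreeProd I A B →* FreeGroup (Index I A B) ≀ᵣ (A × B) :=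
  Coprod.lift
    (Coprod.lift
      (FreeGroup.lift fun i => base _ _ fun x => FreeGroup.of (Sum.inl (x, i)))
      (RegularWreathProduct.inl.comp (MonoidHom.inl A B)))
    ((MulAut.conj (base _ _ commSymbol)).toMonoidHom.comp
      (RegularWreathProduct.inl.comp (MonoidHom.inr A B)))

lemma rewriting_gen (i : I) : rewriting (gen i : FreeProd I A B) =
    ⟨fun x => FreeGroup.of (Sum.inl (x, i)), 1⟩ := by
  simp [rewriting, gen, base]

lemma rewriting_inA (a : A) : rewriting (inA a : FreeProd I A B) = ⟨1, (a, 1)⟩ := by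
  simp [rewriting, inA, RegularWreathProduct.inl]

lemma rewriting_inB (b : B) : rewriting (inB b : FreeProd I A B) =
    ⟨fun x => commSymbol x * (commSymbol ((1, b)⁻¹ * x))⁻¹, (1, b)⟩ := by
  ext <;> simp [rewriting, inB, base]

/-- Rewriting followed by evaluation is the Kaloujnine–Krasner homomorphism. -/
lemma mapLeft_comp_rewriting :
    (mapLeft evalHom).comp rewriting = krasner (proj I A B) sec := by
  refine hom_ext (fun i => ?_) (fun a => ?_) (fun b => ?_)
  · ext x
    · simp [rewriting_gen, mapLeft, krasner, evalHom]
    · simp [rewriting_gen, mapLeft, krasner]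
    · simp [rewriting_gen, mapLeft, krasner]
  · ext x
    · simp [rewriting_inA, mapLeft, krasner, sec, mul_assoc]
    · simp [rewriting_inA, mapLeft, krasner]
    · simp [rewriting_inA, mapLeft, krasner]
  · ext x
    · simp [rewriting_inB, mapLeft, krasner, evalHom_commSymbol, sec, mul_assoc]
    · simp [rewriting_inB, mapLeft, krasner]
    · simp [rewriting_inB, mapLeft, krasner]

lemma rewriting_right (g : FreeProd I A B) : (rewriting g).right = proj I A B g :=
  congrArg RegularWreathProduct.right (DFunLike.congr_fun mapLeft_comp_rewriting g)

lemma evalHom_rewriting {g : FreeProd I A B} (hg : proj I A B g = 1) :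
    evalHom ((rewriting g).left 1) = g := by
  have := congrArg (fun w => w.left 1) (DFunLike.congr_fun mapLeft_comp_rewriting g)
  simpa [mapLeft, krasner, hg, sec] using this

lemma rewriting_sec (x : A × B) : (rewriting (sec x : FreeProd I A B)).left x = 1 := by
  simp [sec, rewriting_inA, rewriting_inB, commSymbol]

/-- The map `w ↦ Φ (ψ w)₁`, where `Φ = rewriting` and `ψ = evalHom`. It is multiplicative because
`Φ ∘ ψ` takes values in the base of the wreath product. -/
def rewriteEval : FreeGroup (Index I A B) →* FreeGroup (Index I A B) where
  toFun w := (rewriting (evalHom w)).left 1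
  map_one' := by simp
  map_mul' v w := by simp [rewriting_right, proj_evalHom]

/-- Evaluating a word and rewriting the result returns the word. -/
lemma rewriting_evalHom (w : FreeGroup (Index I A B)) : (rewriting (evalHom w)).left 1 = w := by
  have : rewriteEval = MonoidHom.id (FreeGroup (Index I A B)) := by
    ext y : 1
    rcases y with ⟨x, i⟩ | ⟨⟨a, ha⟩, ⟨b, hb⟩⟩
    · simp [rewriteEval, evalHom, rewriting_right, rewriting_gen, rewriting_sec]
    · simp [rewriteEval, evalHom, rewriting_right, rewriting_sec, rewriting_inA, rewriting_inB]
      simp [commSymbol, ha, hb]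
  exact DFunLike.congr_fun this w

variable (I A B) in
/-- The kernel of `F(I) * A * B → A × B` is free on the Schreier generators. -/
def kerEquiv : FreeGroup (Index I A B) ≃* (proj I A B).ker :=
  MulEquiv.ofBijective (evalHom.codRestrict (proj I A B).ker proj_evalHom) <| by
    refine ⟨fun v w hvw => ?_, fun g => ⟨(rewriting g.1).left 1, ?_⟩⟩
    · have h : evalHom v = evalHom w := congrArg Subtype.val hvw
      rw [← rewriting_evalHom v, h, rewriting_evalHom]
    · exact Subtype.ext (evalHom_rewriting g.2)

lemma card_index (n : ℕ) [Finite A] [Finite B] :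
    Nat.card (Index (Fin n) A B) = Nat.card A * Nat.card B * n +
      (Nat.card A - 1) * (Nat.card B - 1) := by
  have := Fintype.ofFinite A
  have := Fintype.ofFinite B
  simp [Fintype.card_subtype_compl]

end ReidemeisterSchreier

/-- The Chinese remainder isomorphism in multiplicative notation. -/
def crtMulEquiv (p q : ℕ) (h : Nat.Coprime p q) :
    Multiplicative (ZMod p) × Multiplicative (ZMod q) ≃* Multiplicative (ZMod (p * q)) where
  toFun x := .ofAdd ((ZMod.chineseRemainder h).symm (x.1.toAdd, x.2.toAdd))
  invFun y := (.ofAdd (ZMod.chineseRemainder h y.toAdd).1,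
    .ofAdd (ZMod.chineseRemainder h y.toAdd).2)
  left_inv x := by simp
  right_inv y := by simp
  map_mul' x y := by
    rw [← ofAdd_add, ← map_add]
    rfl

open ReidemeisterSchreier in
lemma torsionProjection_eq (r p q : ℕ) (h : Nat.Coprime p q) :
    torsionProjection r p q h = (crtMulEquiv p q h).toMonoidHom.comp
      (proj (Fin r) (Multiplicative (ZMod p)) (Multiplicative (ZMod q))) := by
  refine hom_ext (fun i => ?_) (fun a => ?_) (fun b => ?_)
  · rw [MonoidHom.comp_apply, proj_gen, map_one]
    simp [torsionProjection, gen]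
  · rw [MonoidHom.comp_apply, proj_inA]
    simp [torsionProjection, inA]
    rfl
  · rw [MonoidHom.comp_apply, proj_inB]
    simp [torsionProjection, inB]
    rfl

/-- Let `r ≥ 0`, `p, q ≥ 1` with `gcd(p,q) = 1`, and let
`G = 𝔽_r * ℤ/pℤ * ℤ/qℤ`.  The composition `π : G → ℤ/pqℤ` of the abelianization with the
projection onto the torsion is surjective and its kernel is a free group of rank
`pqr + (p−1)(q−1)`. -/
theorem torsionProjection_surjective_ker_free (r p q : ℕ) (hp : 1 ≤ p) (hq : 1 ≤ q)
    (h : Nat.Coprime p q) :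
    Function.Surjective (torsionProjection r p q h) ∧
      Nonempty (↥(MonoidHom.ker (G := FreeProdFreeCyclicCyclic r p q)
          (M := Multiplicative (ZMod (p * q))) (torsionProjection r p q h)) ≃*
        FreeGroup (Fin (p * q * r + (p - 1) * (q - 1)))) := by
  have : NeZero p := ⟨by omega⟩
  have : NeZero q := ⟨by omega⟩
  rw [torsionProjection_eq]
  constructor
  · exact (crtMulEquiv p q h).surjective.comp fun x => ⟨_, ReidemeisterSchreier.proj_sec x⟩
  · rw [MonoidHom.ker_comp_of_injective _ _ (crtMulEquiv p q h).injective]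
    refine ⟨(ReidemeisterSchreier.kerEquiv _ _ _).symm.trans
      (FreeGroup.freeGroupCongr (Finite.equivFinOfCardEq ?_))⟩
    rw [ReidemeisterSchreier.card_index]
    simp

end
end

section
/- Let r ≥ 2 and let G be the group with presentation ⟨ γ₁, …, γ_r, x₁, x₂ | γ₁⁻¹x₁γ₁ = x₁, γ₁⁻¹x₂γ₁ = x₁x₂, γ₂⁻¹x₁γ₂ = x₂x₁, γ₂⁻¹x₂γ₂ = x₂, and γ_k⁻¹x_iγ_k = x_i for 3 ≤ k ≤ r, i = 1,2 ⟩. Then the quotient of G by the normal closure of γ₁ is a free group of rank r−1, and likewise the quotient of G by the normal closure of γ₂ is a free group of rank r−1. In particular G itself is not a free group. -/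
/-!
Write `x₁, x₂` for the images of the generators `xGen r 0`, `xGen r 1` in `G`.

*Quotients.* Killing `γ₁` turns `γ₁⁻¹x₂γ₁ = x₁x₂` into `x₁ = 1`, and then `γ₂⁻¹x₁γ₂ = x₂x₁` into
`x₂ = 1`; killing `γ₂` gives `x₂ = 1` from the second of these relations and then `x₁ = 1` from the
first (`x_eq_one_of_gamma_zero`, `x_eq_one_of_gamma_one`). All relations become trivial, so the
quotient is free on the remaining `r - 1` generators `γ_k` (`quotientEquiv`).

*`G` is not free.* The elements `γ₁` and `x₁` commute. In a free group the subgroup they generate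
would be free by Nielsen–Schreier and commutative, hence cyclic
(`exists_zpow_of_commute`), so `γ₁ = g ^ n` and `x₁ = g ^ m`. The homomorphism `G → ℤ` sending `γ₁`
to `1` and all other generators to `0` forces `m = 0`, that is `x₁ = 1`. But `x₁ ≠ 1`: the action
of `γ₁, γ₂` on `x₁, x₂` modulo squares and commutators is realised inside the symmetric group on
four letters, with `x₁, x₂` in the Klein four-group and `γ₁, γ₂` transpositions (`x_zero_ne_one`).
-/

/-!
Statement 11: For the group `G` with presentation
`⟨γ₁,…,γ_r,x₁,x₂ ∣ γ₁⁻¹x₁γ₁ = x₁, γ₁⁻¹x₂γ₁ = x₁x₂, γ₂⁻¹x₁γ₂ = x₂x₁, γ₂⁻¹x₂γ₂ = x₂,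
γ_k⁻¹x_iγ_k = x_i (k ≥ 3)⟩`, the quotient by the normal closure of `γ₁` (resp. `γ₂`) is free
of rank `r − 1`, and `G` is not free.
-/

/-- The generator `γ_k` of the free group on `γ₁, …, γ_r, x₁, x₂`. -/
def gammaGen (r : ℕ) (k : Fin r) : FreeGroup (Fin r ⊕ Fin 2) :=
  FreeGroup.of (Sum.inl k)

/-- The generator `x_i` of the free group on `γ₁, …, γ_r, x₁, x₂`. -/
def xGen (r : ℕ) (i : Fin 2) : FreeGroup (Fin r ⊕ Fin 2) :=
  FreeGroup.of (Sum.inr i)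

/-- The relators `γ_k⁻¹ x_i γ_k ((g_k)_*(x_i))⁻¹` of the presentation: the monodromy words
are `(g_1)_*(x_1) = x_1`, `(g_1)_*(x_2) = x_1x_2`, `(g_2)_*(x_1) = x_2x_1`,
`(g_2)_*(x_2) = x_2`, and `(g_k)_*(x_i) = x_i` for `k ≥ 3`. -/
def cubicRelator (r : ℕ) : Fin r × Fin 2 → FreeGroup (Fin r ⊕ Fin 2) := fun p =>
  (gammaGen r p.1)⁻¹ * xGen r p.2 * gammaGen r p.1 *
    (if (p.1 : ℕ) = 0 then (if (p.2 : ℕ) = 0 then xGen r 0 else xGen r 0 * xGen r 1)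
     else if (p.1 : ℕ) = 1 then (if (p.2 : ℕ) = 0 then xGen r 1 * xGen r 0 else xGen r 1)
     else xGen r p.2)⁻¹

/-- The group `G` given by the presentation
`⟨γ₁,…,γ_r,x₁,x₂ ∣ γ₁⁻¹x₁γ₁ = x₁, γ₁⁻¹x₂γ₁ = x₁x₂, γ₂⁻¹x₁γ₂ = x₂x₁, γ₂⁻¹x₂γ₂ = x₂,
γ_k⁻¹x_iγ_k = x_i (3 ≤ k ≤ r, i = 1,2)⟩`. -/
def CubicPencilGroup (r : ℕ) : Type :=
  PresentedGroup (Set.range (cubicRelator r))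

instance (r : ℕ) : Group (CubicPencilGroup r) :=
  inferInstanceAs (Group (PresentedGroup _))

/-- The image of the generator `γ_k` in the presented group. -/
def CubicPencilGroup.gamma (r : ℕ) (k : Fin r) : CubicPencilGroup r :=
  PresentedGroup.of (Sum.inl k)

namespace CubicPencilGroup

variable {r : ℕ} {H : Type*} [Group H]

/-- The image of the generator `x_i` in the presented group. -/
def x (r : ℕ) (i : Fin 2) : CubicPencilGroup r :=
  PresentedGroup.of (Sum.inr i)

/-- The quotient map from the free group onto the presented group. -/
def proj (r : ℕ) : FreeGroup (Fin r ⊕ Fin 2) →* CubicPencilGroup r :=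
  PresentedGroup.mk _

lemma proj_gammaGen (k : Fin r) : proj r (gammaGen r k) = gamma r k := rfl

lemma proj_xGen (i : Fin 2) : proj r (xGen r i) = x r i := rfl

lemma proj_relator (p : Fin r × Fin 2) : proj r (cubicRelator r p) = 1 :=
  PresentedGroup.one_of_mem ⟨p, rfl⟩

/-- The universal property of the presentation: a choice of images of the generators that kills
the relators extends to `G`. -/
def lift (g : Fin r → H) (y : Fin 2 → H)
    (h : ∀ p, FreeGroup.lift (Sum.elim g y) (cubicRelator r p) = 1) :
    CubicPencilGroup r →* H :=
  PresentedGroup.toGroup (f := Sum.elim g y) (by rintro _ ⟨p, rfl⟩; exact h p)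

lemma lift_gamma (g : Fin r → H) (y : Fin 2 → H) (h) (k : Fin r) :
    lift g y h (gamma r k) = g k :=
  PresentedGroup.toGroup.of _

lemma lift_x (g : Fin r → H) (y : Fin 2 → H) (h) (i : Fin 2) :
    lift g y h (x r i) = y i :=
  PresentedGroup.toGroup.of _

lemma hom_ext {f f' : CubicPencilGroup r →* H} (hγ : ∀ k, f (gamma r k) = f' (gamma r k))
    (hx : ∀ i, f (x r i) = f' (x r i)) : f = f' := by
  refine PresentedGroup.ext (rels := Set.range (cubicRelator r)) ?_
  rintro (k | i)
  · exact hγ k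
  · exact hx i

lemma gamma_zero_x_zero (h0 : 0 < r) :
    (gamma r ⟨0, h0⟩)⁻¹ * x r 0 * gamma r ⟨0, h0⟩ = x r 0 := by
  have := proj_relator (r := r) (⟨0, h0⟩, 0)
  simpa [cubicRelator, proj_gammaGen, proj_xGen, mul_inv_eq_one] using this

lemma gamma_zero_x_one (h0 : 0 < r) :
    (gamma r ⟨0, h0⟩)⁻¹ * x r 1 * gamma r ⟨0, h0⟩ = x r 0 * x r 1 := by
  have := proj_relator (r := r) (⟨0, h0⟩, 1)
  rw [← mul_inv_eq_one]
  simpa [cubicRelator, proj_gammaGen, proj_xGen] using this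

lemma gamma_one_x_zero (h1 : 1 < r) :
    (gamma r ⟨1, h1⟩)⁻¹ * x r 0 * gamma r ⟨1, h1⟩ = x r 1 * x r 0 := by
  have := proj_relator (r := r) (⟨1, h1⟩, 0)
  rw [← mul_inv_eq_one]
  simpa [cubicRelator, proj_gammaGen, proj_xGen] using this

lemma x_eq_one_of_gamma_zero (h0 : 0 < r) (h1 : 1 < r) (f : CubicPencilGroup r →* H)
    (hf : f (gamma r ⟨0, h0⟩) = 1) (i : Fin 2) : f (x r i) = 1 := by
  have e1 := congrArg f (gamma_zero_x_one h0)
  have e2 := congrArg f (gamma_one_x_zero h1)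
  simp only [map_mul, map_inv, hf, inv_one, one_mul, mul_one, right_eq_mul] at e1 e2
  simp only [e1, mul_one, inv_mul_cancel] at e2
  fin_cases i
  · exact e1
  · exact e2.symm

lemma x_eq_one_of_gamma_one (h0 : 0 < r) (h1 : 1 < r) (f : CubicPencilGroup r →* H)
    (hf : f (gamma r ⟨1, h1⟩) = 1) (i : Fin 2) : f (x r i) = 1 := by
  have e1 := congrArg f (gamma_zero_x_one h0)
  have e2 := congrArg f (gamma_one_x_zero h1)
  simp only [map_mul, map_inv, hf, inv_one, one_mul, mul_one, right_eq_mul] at e1 e2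
  simp only [e2, mul_one, inv_mul_cancel] at e1
  fin_cases i
  · exact e1.symm
  · exact e2

/-- The relators impose no condition on the `γ_k` once `x₁` and `x₂` are sent to `1`. -/
lemma lift_relator_of_x_one (g : Fin r → H) (p : Fin r × Fin 2) :
    FreeGroup.lift (Sum.elim g fun _ => 1) (cubicRelator r p) = 1 := by
  simp only [cubicRelator]
  split_ifs <;> simp only [gammaGen, xGen, map_mul, map_inv, FreeGroup.lift_apply_of,
    Sum.elim_inl, Sum.elim_inr, mul_one, inv_one, inv_mul_cancel]

/-- Retraction of `G` onto the free group on the `γ_k` with `k ≠ j`, killing `γ_j`, `x₁`, `x₂`. -/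
def retraction (j : Fin r) : CubicPencilGroup r →* FreeGroup {k : Fin r // k ≠ j} :=
  lift (fun k => if h : k ≠ j then FreeGroup.of ⟨k, h⟩ else 1) (fun _ => 1)
    (lift_relator_of_x_one _)

/-- If killing `γ_j` kills `x₁` and `x₂`, then the quotient of `G` by the normal closure of `γ_j`
is free on the other `γ_k`. -/
def quotientEquiv (j : Fin r)
    (hx : ∀ i, QuotientGroup.mk' (Subgroup.normalClosure {gamma r j}) (x r i) = 1) :
    (CubicPencilGroup r ⧸ Subgroup.normalClosure {gamma r j}) ≃*
      FreeGroup {k : Fin r // k ≠ j} :=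
  MonoidHom.toMulEquiv
    (QuotientGroup.lift _ (retraction j) (Subgroup.normalClosure_le_normal (by
      simp [retraction, lift_gamma])))
    (FreeGroup.lift fun k => QuotientGroup.mk' _ (gamma r k))
    (by
      refine QuotientGroup.monoidHom_ext _ (hom_ext (fun k => ?_) (fun i => ?_))
      · by_cases hk : k = j
        · subst hk
          have : QuotientGroup.mk' (Subgroup.normalClosure {gamma r k}) (gamma r k) = 1 :=
            (QuotientGroup.eq_one_iff _).2 (Subgroup.subset_normalClosure rfl)
          simpa [retraction, lift_gamma] using this.symm
        · simp [retraction, lift_gamma, hk]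
      · simpa [retraction, lift_x] using (hx i).symm)
    (by
      ext k
      simp [retraction, lift_gamma, k.2])

lemma nonempty_equiv_fin (j : Fin r) :
    Nonempty (FreeGroup {k : Fin r // k ≠ j} ≃* FreeGroup (Fin (r - 1))) :=
  ⟨FreeGroup.freeGroupCongr (Fintype.equivOfCardEq (by simp))⟩

/-- A free group whose elements all commute has at most one free generator, hence is cyclic. -/
lemma isCyclic_of_isFreeGroup_of_commute (K : Type*) [Group K] [IsFreeGroup K]
    (hK : ∀ a b : K, a * b = b * a) : IsCyclic K := by
  let e := IsFreeGroup.toFreeGroup K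
  have hsub : Subsingleton (IsFreeGroup.Generators K) := by
    refine ⟨fun a b => ?_⟩
    by_contra hab
    have h := congrArg e (hK (e.symm (FreeGroup.of a)) (e.symm (FreeGroup.of b)))
    simp only [map_mul, MulEquiv.apply_symm_apply] at h
    -- two distinct generators can be sent to two transpositions that do not commute
    classical
    have h' := congrArg (FreeGroup.lift fun c =>
      if c = a then (Equiv.swap 0 1 : Equiv.Perm (Fin 3)) else Equiv.swap 1 2) h
    simp only [map_mul, FreeGroup.lift_apply_of, if_true, if_neg (Ne.symm hab)] at h'
    revert h'
    decide
  have : IsCyclic (FreeGroup (IsFreeGroup.Generators K)) := by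
    rcases isEmpty_or_nonempty (IsFreeGroup.Generators K) with hE | ⟨⟨a⟩⟩
    · infer_instance
    · have := uniqueOfSubsingleton a
      infer_instance
  exact isCyclic_of_surjective e.symm e.symm.surjective

/-- Commuting elements of a free group are powers of a common element. -/
lemma exists_zpow_of_commute {K : Type*} [Group K] [IsFreeGroup K] {a b : K}
    (h : a * b = b * a) : ∃ (g : K) (n m : ℤ), g ^ n = a ∧ g ^ m = b := by
  have hcomm : ∀ u ∈ ({a, b} : Set K), ∀ v ∈ ({a, b} : Set K), u * v = v * u := by
    rintro u (rfl | rfl) v (rfl | rfl) <;> simp [h]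
  let L := Subgroup.closure ({a, b} : Set K)
  have hL : IsMulCommutative L := Subgroup.isMulCommutative_closure hcomm
  have hc : IsCyclic L := isCyclic_of_isFreeGroup_of_commute L fun u v => hL.is_comm.comm u v
  obtain ⟨g, hg⟩ := hc.exists_generator
  obtain ⟨n, hn⟩ := hg ⟨a, Subgroup.subset_closure (by simp)⟩
  obtain ⟨m, hm⟩ := hg ⟨b, Subgroup.subset_closure (by simp)⟩
  exact ⟨g, n, m, by simpa using congrArg Subtype.val hn, by simpa using congrArg Subtype.val hm⟩

/-- The homomorphism `G → ℤ` sending `γ₁` to `1` and every other generator to `0`. -/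
def degree (r : ℕ) : CubicPencilGroup r →* Multiplicative ℤ :=
  lift (fun k => if (k : ℕ) = 0 then Multiplicative.ofAdd 1 else 1) (fun _ => 1)
    (lift_relator_of_x_one _)

/-- The representation of `G` on four letters sending `x₁, x₂` into the Klein four-group, `γ₁` and
`γ₂` to transpositions, and the other `γ_k` to `1`. -/
def toPerm (r : ℕ) : CubicPencilGroup r →* Equiv.Perm (Fin 4) :=
  lift (fun k => if (k : ℕ) = 0 then Equiv.swap 0 1
      else if (k : ℕ) = 1 then Equiv.swap 0 2 else 1)
    ![Equiv.swap 0 1 * Equiv.swap 2 3, Equiv.swap 0 2 * Equiv.swap 1 3] (by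
    rintro ⟨k, i⟩
    by_cases h0 : (k : ℕ) = 0
    · fin_cases i <;> simp [cubicRelator, gammaGen, xGen, h0] <;> decide
    by_cases h1 : (k : ℕ) = 1
    · fin_cases i <;> simp [cubicRelator, gammaGen, xGen, h1] <;> decide
    · simp [cubicRelator, gammaGen, xGen, h0, h1])

lemma x_zero_ne_one (r : ℕ) : x r 0 ≠ 1 := by
  intro h
  have h' := congrArg (toPerm r) h
  rw [map_one, toPerm, lift_x] at h'
  revert h'
  decide

lemma not_isFreeGroup (h0 : 0 < r) : ¬ IsFreeGroup (CubicPencilGroup r) := by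
  intro hfree
  have hcomm : gamma r ⟨0, h0⟩ * x r 0 = x r 0 * gamma r ⟨0, h0⟩ := by
    have := gamma_zero_x_zero h0
    rw [mul_assoc, inv_mul_eq_iff_eq_mul] at this
    exact this.symm
  obtain ⟨g, n, m, hn, hm⟩ := exists_zpow_of_commute hcomm
  have h1 := congrArg (degree r) hn
  have h2 := congrArg (degree r) hm
  rw [map_zpow, degree, lift_gamma, if_pos rfl] at h1
  rw [map_zpow, degree, lift_x] at h2
  rw [← degree] at h1 h2
  have h1' : n * (degree r g).toAdd = 1 := by simpa using congrArg Multiplicative.toAdd h1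
  have h2' : m * (degree r g).toAdd = 0 := by simpa using congrArg Multiplicative.toAdd h2
  have hm0 : m = 0 := by
    rcases mul_eq_zero.1 h2' with h | h
    · exact h
    · simp [h] at h1'
  exact x_zero_ne_one r (by rw [← hm, hm0, zpow_zero])

end CubicPencilGroup

/-- Let `r ≥ 2` and let `G` be the group with presentation
`⟨γ₁,…,γ_r,x₁,x₂ ∣ γ₁⁻¹x₁γ₁ = x₁, γ₁⁻¹x₂γ₁ = x₁x₂, γ₂⁻¹x₁γ₂ = x₂x₁, γ₂⁻¹x₂γ₂ = x₂,
γ_k⁻¹x_iγ_k = x_i (3 ≤ k ≤ r)⟩`.  Then the quotient of `G` by the normal closure of `γ₁` is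
free of rank `r − 1`, the quotient of `G` by the normal closure of `γ₂` is free of rank
`r − 1`, and `G` itself is not a free group. -/
theorem cubicPencilGroup_quotients_free_and_not_free (r : ℕ) (hr : 2 ≤ r) :
    Nonempty ((CubicPencilGroup r ⧸
        Subgroup.normalClosure {CubicPencilGroup.gamma r ⟨0, by omega⟩}) ≃*
      FreeGroup (Fin (r - 1))) ∧
    Nonempty ((CubicPencilGroup r ⧸
        Subgroup.normalClosure {CubicPencilGroup.gamma r ⟨1, by omega⟩}) ≃*
      FreeGroup (Fin (r - 1))) ∧
    ¬ ∃ S : Type, Nonempty (CubicPencilGroup r ≃* FreeGroup S) := by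
  refine ⟨?_, ?_, ?_⟩
  · obtain ⟨e⟩ := CubicPencilGroup.nonempty_equiv_fin (⟨0, by omega⟩ : Fin r)
    refine ⟨(CubicPencilGroup.quotientEquiv _ ?_).trans e⟩
    exact CubicPencilGroup.x_eq_one_of_gamma_zero (by omega) (by omega) _
      ((QuotientGroup.eq_one_iff _).2 (Subgroup.subset_normalClosure rfl))
  · obtain ⟨e⟩ := CubicPencilGroup.nonempty_equiv_fin (⟨1, by omega⟩ : Fin r)
    refine ⟨(CubicPencilGroup.quotientEquiv _ ?_).trans e⟩
    exact CubicPencilGroup.x_eq_one_of_gamma_one (by omega) (by omega) _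
      ((QuotientGroup.eq_one_iff _).2 (Subgroup.subset_normalClosure rfl))
  · rintro ⟨S, ⟨e⟩⟩
    exact CubicPencilGroup.not_isFreeGroup (by omega) (IsFreeGroup.ofMulEquiv e.symm)
end
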